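/- Assume the nonlinearity N is of non-parabolic resonance type, i.e. P_N(f) = 0 for every f ∈ C^∞(𝕋). Let T > 0, let φ ∈ H^{12}(𝕋) be real-valued, and let u₁, u₂ ∈ C([−T,T]; L²(𝕋)) ∩ L^∞([−T,T]; H^{12}(𝕋)) be real-valued solutions (in the sense of distributions) of ∂_t u + γ₀∂_x⁵u + γ₁∂_x³u + γ₂∂_x u = N(∂_x³u,∂_x²u,∂_xu,u) on [−T,T]×𝕋 with u₁(0,·) = u₂(0,·) = φ. Then u₁(t) = u₂(t) for all t ∈ [−T,T]. -/

import Mathlib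

/- Fifth order dispersive equations on the torus: uniqueness for
   non-parabolic resonance type nonlinearities. -/

namespace FifthOrderStmt1

/-- Fourier coefficient of a `2π`-periodic function `f : ℝ → ℝ`:
`f̂(k) = (1/2π) ∫_0^{2π} f(x) e^{-ikx} dx`. -/
noncomputable def fc (f : ℝ → ℝ) (k : ℤ) : ℂ :=
  (Complex.ofReal (2 * Real.pi))⁻¹ *
    ∫ x in (0:ℝ)..(2 * Real.pi), (f x : ℂ) * Complex.exp (-Complex.I * (k : ℂ) * (x : ℂ))

/-- Sobolev norm `‖f‖_{H^s} = (Σ_k (1+k²)^s |f̂(k)|²)^{1/2}`. -/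
noncomputable def hsNorm (s : ℕ) (f : ℝ → ℝ) : ℝ :=
  Real.sqrt (∑' k : ℤ, (1 + (k : ℝ) ^ 2) ^ s * ‖fc f k‖ ^ 2)

/-- `f` belongs to `H^s(𝕋)` (continuous representative, `2π`-periodic, finite `H^s` norm). -/
def MemHs (s : ℕ) (f : ℝ → ℝ) : Prop :=
  Continuous f ∧ Function.Periodic f (2 * Real.pi) ∧
    Summable (fun k : ℤ => (1 + (k : ℝ) ^ 2) ^ s * ‖fc f k‖ ^ 2)

/-- The nonlinearity `N(∂_x³f, ∂_x²f, ∂_xf, f) = Σ_j λ_j (∂_x³f)^{a_j}(∂_x²f)^{b_j}(∂_xf)^{c_j}f^{d_j}`. -/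
noncomputable def Nfun (j0 : ℕ) (lam : Fin j0 → ℝ) (a b c d : Fin j0 → ℕ)
    (f : ℝ → ℝ) (x : ℝ) : ℝ :=
  ∑ j : Fin j0, lam j * (iteratedDeriv 3 f x) ^ (a j) * (iteratedDeriv 2 f x) ^ (b j) *
    (deriv f x) ^ (c j) * (f x) ^ (d j)

/-- The functional `P_N(f) = Σ_j (λ_j b_j / 2π) ∫_𝕋 (∂_x³f)^{a_j}(∂_x²f)^{b_j-1}(∂_xf)^{c_j}f^{d_j} dx`. -/
noncomputable def PN (j0 : ℕ) (lam : Fin j0 → ℝ) (a b c d : Fin j0 → ℕ) (f : ℝ → ℝ) : ℝ :=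
  ∑ j : Fin j0, (lam j * (b j : ℝ) / (2 * Real.pi)) *
    ∫ x in (0:ℝ)..(2 * Real.pi),
      (iteratedDeriv 3 f x) ^ (a j) * (iteratedDeriv 2 f x) ^ (b j - 1) *
        (deriv f x) ^ (c j) * (f x) ^ (d j)

/-- `u` is a (distributional) solution of
`∂_t u + γ₀∂_x⁵u + γ₁∂_x³u + γ₂∂_x u = N(∂_x³u,∂_x²u,∂_xu,u)` on `[T₁,T₂] × 𝕋`:
each `u(t)` is `2π`-periodic and `C³` in `x` (so that `N(u)` is defined pointwise), and for every
smooth test function `ψ`, `2π`-periodic in `x` and compactly supported in time inside `(T₁,T₂)`,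
the integrated-by-parts identity holds. -/
def IsSolution (γ0 γ1 γ2 : ℝ) (j0 : ℕ) (lam : Fin j0 → ℝ) (a b c d : Fin j0 → ℕ)
    (T1 T2 : ℝ) (u : ℝ → ℝ → ℝ) : Prop :=
  (∀ t ∈ Set.Icc T1 T2, ContDiff ℝ 3 (u t) ∧ Function.Periodic (u t) (2 * Real.pi)) ∧
  ∀ ψ : ℝ → ℝ → ℝ, ContDiff ℝ (⊤ : ℕ∞) (Function.uncurry ψ) →
    (∀ t : ℝ, Function.Periodic (ψ t) (2 * Real.pi)) →
    (∀ t : ℝ, t ∉ Set.Ioo T1 T2 → ∀ x : ℝ, ψ t x = 0) →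
    (∫ t in T1..T2, ∫ x in (0:ℝ)..(2 * Real.pi),
      (u t x * (deriv (fun τ : ℝ => ψ τ x) t
        + γ0 * iteratedDeriv 5 (ψ t) x
        + γ1 * iteratedDeriv 3 (ψ t) x
        + γ2 * deriv (ψ t) x)
      + Nfun j0 lam a b c d (u t) x * ψ t x)) = 0

/-- `t ↦ u(t)` is continuous from `A` into `H^s(𝕋)`. -/
def ContInHs (s : ℕ) (A : Set ℝ) (u : ℝ → ℝ → ℝ) : Prop :=
  ∀ t₀ ∈ A, ∀ ε > 0, ∃ δ > 0, ∀ t ∈ A, |t - t₀| < δ →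
    hsNorm s (fun x => u t x - u t₀ x) < ε

/-- `f p` is `n` times differentiable for each parameter `p`, and the derivatives of order at most
`n` are jointly continuous in the parameter and the variable. -/
def JointCk {P : Type*} [TopologicalSpace P] : ℕ → (P → ℝ → ℝ) → Prop
  | 0, f => Continuous (Function.uncurry f)
  | n + 1, f => Continuous (Function.uncurry f) ∧ (∀ p, Differentiable ℝ (f p)) ∧
      JointCk n (fun p => deriv (f p))

namespace JointCk

variable {P Q : Type*} [TopologicalSpace P] [TopologicalSpace Q] {n m : ℕ} {f g : P → ℝ → ℝ}

theorem continuous (hf : JointCk n f) : Continuous (Function.uncurry f) := by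
  cases n with
  | zero => exact hf
  | succ n => exact hf.1

theorem hasDerivAt (hf : JointCk (n + 1) f) (p : P) (x : ℝ) :
    HasDerivAt (f p) (deriv (f p) x) x :=
  (hf.2.1 p x).hasDerivAt

theorem deriv (hf : JointCk (n + 1) f) : JointCk n (fun p => deriv (f p)) := hf.2.2

theorem of_hasDerivAt {f' : P → ℝ → ℝ} (hc : Continuous (Function.uncurry f))
    (h : ∀ p x, HasDerivAt (f p) (f' p x) x) (hf' : JointCk n f') : JointCk (n + 1) f := by
  refine ⟨hc, fun p x => (h p x).differentiableAt, ?_⟩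
  have : (fun p => _root_.deriv (f p)) = f' := by
    ext p x
    exact (h p x).deriv
  rw [this]
  exact hf'

theorem of_succ (hf : JointCk (n + 1) f) : JointCk n f := by
  induction n generalizing f with
  | zero => exact hf.1
  | succ n ih => exact ⟨hf.1, hf.2.1, ih hf.2.2⟩

theorem mono (hf : JointCk n f) (h : m ≤ n) : JointCk m f := by
  induction n, h using Nat.le_induction with
  | base => exact hf
  | succ n _ ih => exact ih hf.of_succ

theorem of_param {α : P → ℝ} (hα : Continuous α) : JointCk n (fun p _ => α p) := by
  induction n generalizing α with
  | zero => exact hα.comp continuous_fst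
  | succ n ih =>
    exact of_hasDerivAt (hα.comp continuous_fst) (fun p x => hasDerivAt_const x (α p))
      (ih continuous_const)

theorem add (hf : JointCk n f) (hg : JointCk n g) : JointCk n (fun p x => f p x + g p x) := by
  induction n generalizing f g with
  | zero => exact Continuous.add hf hg
  | succ n ih =>
    exact of_hasDerivAt (hf.1.add hg.1) (fun p x => (hf.hasDerivAt p x).add (hg.hasDerivAt p x))
      (ih hf.deriv hg.deriv)

theorem mul (hf : JointCk n f) (hg : JointCk n g) : JointCk n (fun p x => f p x * g p x) := by
  induction n generalizing f g with
  | zero => exact Continuous.mul hf hg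
  | succ n ih =>
    exact of_hasDerivAt (hf.1.mul hg.1) (fun p x => (hf.hasDerivAt p x).mul (hg.hasDerivAt p x))
      ((ih hf.deriv hg.of_succ).add (ih hf.of_succ hg.deriv))

theorem const_mul (c : ℝ) (hf : JointCk n f) : JointCk n (fun p x => c * f p x) :=
  (of_param (α := fun _ => c) continuous_const).mul hf

theorem neg (hf : JointCk n f) : JointCk n (fun p x => -f p x) := by
  simpa using hf.const_mul (-1)

theorem sub (hf : JointCk n f) (hg : JointCk n g) : JointCk n (fun p x => f p x - g p x) := by
  simpa [sub_eq_add_neg] using hf.add hg.neg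

theorem pow (hf : JointCk n f) (k : ℕ) : JointCk n (fun p x => f p x ^ k) := by
  induction k with
  | zero => simpa using of_param (P := P) (n := n) (α := fun _ => 1) continuous_const
  | succ k ih => simpa [pow_succ] using ih.mul hf

theorem sum {ι : Type*} (s : Finset ι) {F : ι → P → ℝ → ℝ} (hF : ∀ i, JointCk n (F i)) :
    JointCk n (fun p x => ∑ i ∈ s, F i p x) := by
  classical
  induction s using Finset.induction_on with
  | empty => simpa using of_param (P := P) (n := n) (α := fun _ => 0) continuous_const
  | insert i s hi ih =>
    simp only [Finset.sum_insert hi]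
    exact (hF i).add ih

theorem comp_param (hf : JointCk n f) {φ : Q → P} (hφ : Continuous φ) :
    JointCk n (fun q => f (φ q)) := by
  induction n generalizing f with
  | zero => exact hf.comp ((hφ.comp continuous_fst).prodMk continuous_snd)
  | succ n ih =>
    exact ⟨hf.1.comp ((hφ.comp continuous_fst).prodMk continuous_snd), fun q => hf.2.1 (φ q),
      ih hf.deriv⟩

end JointCk

/-- Differentiation under the integral sign for jointly continuous derivatives. -/
theorem hasDerivAt_integral_of_continuous {f f' : ℝ → ℝ → ℝ} (a b : ℝ)
    (hf : Continuous (Function.uncurry f)) (hf' : Continuous (Function.uncurry f'))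
    (h : ∀ x y, HasDerivAt (fun z => f z y) (f' x y) x) (x : ℝ) :
    HasDerivAt (fun z => ∫ y in a..b, f z y) (∫ y in a..b, f' x y) x := by
  have hK : IsCompact (Set.Icc (x - 1) (x + 1) ×ˢ Set.uIcc a b) :=
    isCompact_Icc.prod isCompact_uIcc
  obtain ⟨C, hC⟩ := hK.exists_bound_of_continuousOn hf'.continuousOn
  have hfx (z : ℝ) : Continuous (f z) := hf.comp (Continuous.prodMk_right z)
  have hfx' (z : ℝ) : Continuous (f' z) := hf'.comp (Continuous.prodMk_right z)
  refine (intervalIntegral.hasDerivAt_integral_of_dominated_loc_of_deriv_le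
    (bound := fun _ => C) (s := Set.Icc (x - 1) (x + 1)) (Icc_mem_nhds (by linarith) (by linarith))
    (Filter.Eventually.of_forall fun z => (hfx z).aestronglyMeasurable)
    ((hfx x).intervalIntegrable a b) (hfx' x).aestronglyMeasurable ?_ (by simp) ?_).2
  · refine Filter.Eventually.of_forall fun y hy z hz => ?_
    exact hC (z, y) ⟨hz, Set.uIoc_subset_uIcc hy⟩
  · exact Filter.Eventually.of_forall fun y _ z _ => h z y

theorem continuous_integral_of_continuous {X : Type*} [TopologicalSpace X] {f : X → ℝ → ℝ}
    (hf : Continuous (Function.uncurry f)) {α β : X → ℝ} (hα : Continuous α) (hβ : Continuous β) :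
    Continuous (fun p => ∫ y in (α p)..(β p), f p y) := by
  have hi (p : X) (u v : ℝ) : IntervalIntegrable (f p) MeasureTheory.volume u v :=
    (hf.comp (Continuous.prodMk_right p)).intervalIntegrable u v
  have : (fun p => ∫ y in (α p)..(β p), f p y) =
      fun p => (∫ y in (0 : ℝ)..(β p), f p y) - ∫ y in (0 : ℝ)..(α p), f p y := by
    ext p
    rw [intervalIntegral.integral_interval_sub_left (hi p _ _) (hi p _ _)]
  rw [this]
  exact (intervalIntegral.continuous_parametric_intervalIntegral_of_continuous hf hβ).sub
    (intervalIntegral.continuous_parametric_intervalIntegral_of_continuous hf hα)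

namespace JointCk

variable {P : Type*} [TopologicalSpace P] {n : ℕ}

theorem hasDerivAt_integral {f : P × ℝ → ℝ → ℝ} (hf : JointCk (n + 1) f) (a b : ℝ) (p : P)
    (x : ℝ) : HasDerivAt (fun x => ∫ y in a..b, f (p, y) x)
      (∫ y in a..b, _root_.deriv (f (p, y)) x) x := by
  have hφ : Continuous (fun q : ℝ × ℝ => ((p, q.2), q.1)) := by fun_prop
  exact hasDerivAt_integral_of_continuous (f := fun z y => f (p, y) z)
    (f' := fun z y => _root_.deriv (f (p, y)) z) a b (hf.continuous.comp hφ)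
    (hf.deriv.continuous.comp hφ) (fun x y => hf.hasDerivAt (p, y) x) x

theorem integral {f : P × ℝ → ℝ → ℝ} (hf : JointCk n f) {α β : P → ℝ} (hα : Continuous α)
    (hβ : Continuous β) : JointCk n (fun p x => ∫ y in (α p)..(β p), f (p, y) x) := by
  have hc {g : P × ℝ → ℝ → ℝ} (hg : Continuous (Function.uncurry g)) :
      Continuous (Function.uncurry fun p x => ∫ y in (α p)..(β p), g (p, y) x) :=
    continuous_integral_of_continuous (X := P × ℝ) (f := fun q y => g (q.1, y) q.2)
      (hg.comp (by fun_prop : Continuous fun q : (P × ℝ) × ℝ => ((q.1.1, q.2), q.1.2)))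
      (hα.comp continuous_fst) (hβ.comp continuous_fst)
  induction n generalizing f with
  | zero => exact hc hf
  | succ n ih =>
    exact of_hasDerivAt (hc hf.1) (fun p x => hf.hasDerivAt_integral (α p) (β p) p x) (ih hf.deriv)

end JointCk

theorem periodic_deriv {f : ℝ → ℝ} {c : ℝ} (hf : Function.Periodic f c) :
    Function.Periodic (deriv f) c := by
  intro x
  rw [← deriv_comp_add_const, funext hf]

theorem integral_eq_zero_of_periodic {f f' : ℝ → ℝ} {c : ℝ} (hf : Function.Periodic f c)
    (h : ∀ x, HasDerivAt f (f' x) x) (hf' : Continuous f') : ∫ x in (0 : ℝ)..c, f' x = 0 := by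
  rw [intervalIntegral.integral_eq_sub_of_hasDerivAt (fun x _ => h x) (hf'.intervalIntegrable _ _)]
  have := hf 0
  rw [zero_add] at this
  rw [this, sub_self]

namespace JointCk

variable {P : Type*} [TopologicalSpace P] {n k : ℕ} {f : P → ℝ → ℝ}

theorem iteratedDeriv (hf : JointCk n f) (m : ℕ) (h : m + k ≤ n) :
    JointCk m (fun p => iteratedDeriv k (f p)) := by
  induction k generalizing m with
  | zero => simpa using hf.mono (by omega)
  | succ k ih =>
    simp only [iteratedDeriv_succ]
    exact (ih (m + 1) (by omega)).deriv

theorem hasDerivAt_iteratedDeriv (hf : JointCk n f) (h : k < n) (p : P) (x : ℝ) :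
    HasDerivAt (_root_.iteratedDeriv k (f p)) (_root_.iteratedDeriv (k + 1) (f p) x) x := by
  rw [iteratedDeriv_succ]
  exact (hf.iteratedDeriv (k := k) 1 (by omega)).hasDerivAt p x

theorem hasDerivAt_iteratedDeriv_one (hf : JointCk n f) (h : 0 < n) (p : P) (x : ℝ) :
    HasDerivAt (f p) (_root_.iteratedDeriv 1 (f p) x) x := by
  have := hf.hasDerivAt_iteratedDeriv h p x
  rwa [iteratedDeriv_zero, zero_add] at this

theorem continuous_iteratedDeriv (hf : JointCk n f) (h : k ≤ n) :
    Continuous (fun q : P × ℝ => _root_.iteratedDeriv k (f q.1) q.2) :=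
  (hf.iteratedDeriv (k := k) 0 (by omega)).continuous

end JointCk

theorem periodic_iteratedDeriv {f : ℝ → ℝ} {c : ℝ} (hf : Function.Periodic f c) (k : ℕ) :
    Function.Periodic (iteratedDeriv k f) c := by
  induction k with
  | zero => simpa using hf
  | succ k ih =>
    rw [iteratedDeriv_succ]
    exact periodic_deriv ih

/-- Mixed partial derivatives commute: differentiate the evolution law `∂ₛ w = h` in `x`. -/
theorem hasDerivAt_deriv_of_evolution {w h : ℝ → ℝ → ℝ} (hw : JointCk 1 w) (hh : JointCk 1 h)
    (hs : ∀ s x, HasDerivAt (fun σ => w σ x) (h s x) s) (s x : ℝ) :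
    HasDerivAt (fun σ => deriv (w σ) x) (deriv (h s) x) s := by
  have hcs {g : ℝ → ℝ → ℝ} (hg : Continuous (Function.uncurry g)) (y : ℝ) :
      Continuous (fun σ => g σ y) := hg.comp (Continuous.prodMk_left y)
  have hintv (s : ℝ) : w s = fun y => w 0 y + ∫ σ in (0 : ℝ)..s, h σ y := by
    ext y
    rw [intervalIntegral.integral_eq_sub_of_hasDerivAt (fun σ _ => hs σ y)
      ((hcs hh.continuous y).intervalIntegrable _ _)]
    ring
  have hd (s : ℝ) : deriv (w s) x = deriv (w 0) x + ∫ σ in (0 : ℝ)..s, deriv (h σ) x := by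
    have h1 : HasDerivAt (fun y => ∫ σ in (0 : ℝ)..s, h σ y)
        (∫ σ in (0 : ℝ)..s, deriv (h σ) x) x :=
      JointCk.hasDerivAt_integral (P := Unit) (f := fun p => h p.2) (n := 0)
        (hh.comp_param continuous_snd) 0 s () x
    conv_lhs => rw [hintv s]
    exact ((hw.hasDerivAt 0 x).add h1).deriv
  rw [funext hd]
  exact (((hcs hh.deriv.continuous x).integral_hasStrictDerivAt 0 s).hasDerivAt).const_add _

theorem hasDerivAt_iteratedDeriv_of_evolution {w h : ℝ → ℝ → ℝ} {k : ℕ} (hw : JointCk k w)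
    (hh : JointCk k h) (hs : ∀ s x, HasDerivAt (fun σ => w σ x) (h s x) s) (s x : ℝ) :
    HasDerivAt (fun σ => iteratedDeriv k (w σ) x) (iteratedDeriv k (h s) x) s := by
  induction k generalizing s x with
  | zero => simpa using hs s x
  | succ k ih =>
    simp only [iteratedDeriv_succ]
    exact hasDerivAt_deriv_of_evolution (hw.iteratedDeriv 1 (by omega))
      (hh.iteratedDeriv 1 (by omega)) (ih hw.of_succ hh.of_succ) s x

/-- The energy flux: up to an exact `x`-derivative, the energy production of the fifth order
operator is a quadratic form in `w` and `∂ₓ w`, once the weight `F` cancels the `(∂ₓ² w)²` term. -/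
theorem hasDerivAt_energyFlux {γ x : ℝ} {w w1 w2 w3 w4 F F1 F2 F3 a b e a1 a0 : ℝ → ℝ}
    {w5 F4 c e' a1' a0' : ℝ}
    (hw : HasDerivAt w (w1 x) x) (hw1 : HasDerivAt w1 (w2 x) x) (hw2 : HasDerivAt w2 (w3 x) x)
    (hw3 : HasDerivAt w3 (w4 x) x) (hw4 : HasDerivAt w4 w5 x)
    (hF : HasDerivAt F (F1 x) x) (hF1 : HasDerivAt F1 (F2 x) x) (hF2 : HasDerivAt F2 (F3 x) x)
    (hF3 : HasDerivAt F3 F4 x) (ha : HasDerivAt a (b x) x) (hb : HasDerivAt b c x)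
    (he : HasDerivAt e e' x) (ha1 : HasDerivAt a1 a1' x) (ha0 : HasDerivAt a0 a0' x)
    (hbal : 5 * γ / 2 * F1 x = e x - 1 / 2 * b x) :
    HasDerivAt (fun y => γ * (w2 y * w4 y - 1 / 2 * w3 y ^ 2) - 1 / 2 * (a y * w2 y ^ 2)
        - 1 / 2 * (a1 y * w1 y ^ 2) - a0 y * (w y * w1 y)
        - γ * (F y * (w y * w4 y - w1 y * w3 y + 1 / 2 * w2 y ^ 2)
          + F1 y * (2 * (w1 y * w2 y) - w y * w3 y)
          + F2 y * (w y * w2 y - 3 / 2 * w1 y ^ 2) - F3 y * (w y * w1 y))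
        + F y * (a y * (w y * w2 y - 1 / 2 * w1 y ^ 2)) - F1 y * (a y * (w y * w1 y))
        - F y * (b y * (w y * w1 y)) + F y * (e y * (w y * w1 y)))
      ((F x * w x - w2 x) * (-γ * w5 + a x * w3 x + e x * w2 x + a1 x * w1 x + a0 x * w x)
        - ((F x * a0 x) * w x ^ 2
          + (a0' - γ * F4 + (F2 x * a x + 2 * F1 x * b x + F x * c) - (F1 x * e x + F x * e')
              + F x * a1 x) * (w x * w1 x)
          + (1 / 2 * a1' + a0 x - γ * (5 / 2) * F3 x + 3 / 2 * (F1 x * a x + F x * b x)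
              - F x * e x) * w1 x ^ 2)) x := by
  have h := (((((((((((hw2.mul hw4).sub ((hw3.pow 2).const_mul (1 / 2))).const_mul γ).sub
    ((ha.mul (hw2.pow 2)).const_mul (1 / 2))).sub ((ha1.mul (hw1.pow 2)).const_mul (1 / 2))).sub
    (ha0.mul (hw.mul hw1))).sub
    ((((hF.mul (((hw.mul hw4).sub (hw1.mul hw3)).add ((hw2.pow 2).const_mul (1 / 2)))).add
      (hF1.mul (((hw1.mul hw2).const_mul 2).sub (hw.mul hw3)))).add
      (hF2.mul ((hw.mul hw2).sub ((hw1.pow 2).const_mul (3 / 2))))).sub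
      (hF3.mul (hw.mul hw1)) |>.const_mul γ)).add
    (hF.mul (ha.mul ((hw.mul hw2).sub ((hw1.pow 2).const_mul (1 / 2)))))).sub
    (hF1.mul (ha.mul (hw.mul hw1)))).sub
    (hF.mul (hb.mul (hw.mul hw1)))).add (hF.mul (he.mul (hw.mul hw1))))
  refine h.congr_deriv ?_
  simp only [Pi.mul_apply, Pi.sub_apply, Pi.add_apply, Pi.pow_apply]
  linear_combination (-w2 x ^ 2) * hbal

/-- Grönwall's inequality for a nonnegative function with vanishing initial value. -/
theorem eq_zero_of_hasDerivAt_le {E E' : ℝ → ℝ} {C S : ℝ} (hE : ∀ s, HasDerivAt E (E' s) s)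
    (hnn : ∀ s ∈ Set.Icc 0 S, 0 ≤ E s) (hle : ∀ s ∈ Set.Icc 0 S, E' s ≤ C * E s) (h0 : E 0 = 0) :
    ∀ s ∈ Set.Icc 0 S, E s = 0 := by
  intro s hs
  refine le_antisymm ?_ (hnn s hs)
  have := le_gronwallBound_of_liminf_deriv_right_le (f := E) (f' := E') (δ := 0) (K := C) (ε := 0)
    (a := 0) (b := S) (fun s _ => (hE s).continuousAt.continuousWithinAt)
    (fun s _ r hr => (hE s).hasDerivWithinAt.limsup_slope_le' (by simp) hr |>.frequently)
    h0.le (fun s hs => by simpa using hle s ⟨hs.1, hs.2.le⟩) s hs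
  simpa [gronwallBound_ε0] using this

theorem quadraticForm_le {q0 q1 q2 C u v F : ℝ} (h0 : |q0| ≤ C) (h1 : |q1| ≤ C) (h2 : |q2| ≤ C)
    (hF : 1 ≤ F) : q0 * u ^ 2 + q1 * (u * v) + q2 * v ^ 2 ≤ 2 * C * (v ^ 2 + F * u ^ 2) := by
  have hC : 0 ≤ C := (abs_nonneg _).trans h0
  have hu := mul_le_mul_of_nonneg_right ((le_abs_self _).trans h0) (sq_nonneg u)
  have hv := mul_le_mul_of_nonneg_right ((le_abs_self _).trans h2) (sq_nonneg v)
  have huv : q1 * (u * v) ≤ C * ((u ^ 2 + v ^ 2) / 2) := by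
    calc q1 * (u * v) ≤ |q1| * |u * v| := by rw [← abs_mul]; exact le_abs_self _
      _ ≤ C * ((u ^ 2 + v ^ 2) / 2) := by
        gcongr
        rw [abs_le]
        constructor <;> nlinarith [sq_nonneg (u + v), sq_nonneg (u - v)]
  have hFu : C * u ^ 2 ≤ C * (F * u ^ 2) := by
    gcongr
    nlinarith [sq_nonneg u]
  nlinarith [mul_nonneg hC (sq_nonneg u), mul_nonneg hC (sq_nonneg v)]

theorem exists_bound_on_rectangle {q : ℝ → ℝ → ℝ} (hq : Continuous (Function.uncurry q))
    (S L : ℝ) : ∃ C, ∀ s ∈ Set.Icc 0 S, ∀ x ∈ Set.Icc 0 L, |q s x| ≤ C := by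
  obtain ⟨C, hC⟩ := (isCompact_Icc (a := (0 : ℝ)) (b := S)).prod
    (isCompact_Icc (a := (0 : ℝ)) (b := L)) |>.exists_bound_of_continuousOn hq.continuousOn
  exact ⟨C, fun s hs x hx => hC (s, x) ⟨hs, hx⟩⟩

/-- Weighted energy uniqueness for linear fifth order evolution equations whose lower order
coefficients are balanced by a periodic weight `F`. -/
theorem eq_zero_of_linear_evolution {γ S : ℝ} {κ : ℝ → ℝ} {w F Fs a e a1 a0 : ℝ → ℝ → ℝ}
    (hκ : Continuous κ) (hw : JointCk 6 w) (hwp : ∀ s, Function.Periodic (w s) (2 * Real.pi))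
    (hF : JointCk 4 F) (hFp : ∀ s, Function.Periodic (F s) (2 * Real.pi))
    (ha : JointCk 2 a) (hap : ∀ s, Function.Periodic (a s) (2 * Real.pi))
    (he : JointCk 1 e) (hep : ∀ s, Function.Periodic (e s) (2 * Real.pi))
    (ha1 : JointCk 1 a1) (ha1p : ∀ s, Function.Periodic (a1 s) (2 * Real.pi))
    (ha0 : JointCk 1 a0) (ha0p : ∀ s, Function.Periodic (a0 s) (2 * Real.pi))
    (hFs : Continuous (Function.uncurry Fs))
    (hFt : ∀ s x, HasDerivAt (fun σ => F σ x) (Fs s x) s)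
    (hbal : ∀ s x, 5 * γ / 2 * iteratedDeriv 1 (F s) x = e s x - 1 / 2 * iteratedDeriv 1 (a s) x)
    (hev : ∀ s x, HasDerivAt (fun σ => w σ x) (κ s * (-γ * iteratedDeriv 5 (w s) x
      + a s x * iteratedDeriv 3 (w s) x + e s x * iteratedDeriv 2 (w s) x
      + a1 s x * iteratedDeriv 1 (w s) x + a0 s x * w s x)) s)
    (hF1 : ∀ s ∈ Set.Icc 0 S, ∀ x ∈ Set.Icc 0 (2 * Real.pi), 1 ≤ F s x)
    (h0 : ∀ x, w 0 x = 0) :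
    ∀ s ∈ Set.Icc 0 S, ∀ x ∈ Set.Icc 0 (2 * Real.pi), w s x = 0 := by
  have hπ : (0 : ℝ) < 2 * Real.pi := Real.two_pi_pos
  have hWc (k : ℕ) (hk : k ≤ 6) := hw.continuous_iteratedDeriv hk
  have hw0 : Continuous fun q : ℝ × ℝ => w q.1 q.2 := hw.continuous
  have hw1 := hWc 1 (by norm_num)
  have hw2 := hWc 2 (by norm_num)
  have hw3 := hWc 3 (by norm_num)
  have hw4 := hWc 4 (by norm_num)
  have hw5 := hWc 5 (by norm_num)
  have hFc (k : ℕ) (hk : k ≤ 4) := hF.continuous_iteratedDeriv hk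
  have hFc0 : Continuous fun q : ℝ × ℝ => F q.1 q.2 := hF.continuous
  have hFc1 := hFc 1 (by norm_num)
  have hFc2 := hFc 2 (by norm_num)
  have hFc3 := hFc 3 (by norm_num)
  have hFc4 := hFc 4 (by norm_num)
  have hac0 : Continuous fun q : ℝ × ℝ => a q.1 q.2 := ha.continuous
  have hac1 := ha.continuous_iteratedDeriv (k := 1) (by norm_num)
  have hac2 := ha.continuous_iteratedDeriv (k := 2) (by norm_num)
  have hec0 : Continuous fun q : ℝ × ℝ => e q.1 q.2 := he.continuous
  have hec1 := he.continuous_iteratedDeriv (k := 1) (by norm_num)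
  have ha1c0 : Continuous fun q : ℝ × ℝ => a1 q.1 q.2 := ha1.continuous
  have ha1c1 := ha1.continuous_iteratedDeriv (k := 1) (by norm_num)
  have ha0c0 : Continuous fun q : ℝ × ℝ => a0 q.1 q.2 := ha0.continuous
  have ha0c1 := ha0.continuous_iteratedDeriv (k := 1) (by norm_num)
  have hFsc : Continuous fun q : ℝ × ℝ => Fs q.1 q.2 := hFs
  have hκc : Continuous fun q : ℝ × ℝ => κ q.1 := hκ.comp continuous_fst
  let G : ℝ → ℝ → ℝ := fun s x => -γ * iteratedDeriv 5 (w s) x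
      + a s x * iteratedDeriv 3 (w s) x + e s x * iteratedDeriv 2 (w s) x
      + a1 s x * iteratedDeriv 1 (w s) x + a0 s x * w s x
  let h : ℝ → ℝ → ℝ := fun s x => κ s * G s x
  have hG : JointCk 1 G :=
    (((((hw.iteratedDeriv (k := 5) 1 (by norm_num)).const_mul (-γ)).add
      ((ha.mono (by norm_num)).mul (hw.iteratedDeriv (k := 3) 1 (by norm_num)))).add
      (he.mul (hw.iteratedDeriv (k := 2) 1 (by norm_num)))).add
      (ha1.mul (hw.iteratedDeriv (k := 1) 1 (by norm_num)))).add
      (ha0.mul (hw.mono (by norm_num)))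
  have hh : JointCk 1 h := (JointCk.of_param hκ).mul hG
  have hhc0 : Continuous fun q : ℝ × ℝ => h q.1 q.2 := hh.continuous
  have hhc1 := hh.continuous_iteratedDeriv (k := 1) (by norm_num)
  have hev1 := hasDerivAt_iteratedDeriv_of_evolution (k := 1) (hw.mono (by norm_num)) hh hev
  let q0 : ℝ → ℝ → ℝ := fun s x => Fs s x + 2 * κ s * (F s x * a0 s x)
  let q1 : ℝ → ℝ → ℝ := fun s x => 2 * κ s * (iteratedDeriv 1 (a0 s) x
    - γ * iteratedDeriv 4 (F s) x + (iteratedDeriv 2 (F s) x * a s x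
      + 2 * iteratedDeriv 1 (F s) x * iteratedDeriv 1 (a s) x + F s x * iteratedDeriv 2 (a s) x)
    - (iteratedDeriv 1 (F s) x * e s x + F s x * iteratedDeriv 1 (e s) x) + F s x * a1 s x)
  let q2 : ℝ → ℝ → ℝ := fun s x => 2 * κ s * (1 / 2 * iteratedDeriv 1 (a1 s) x + a0 s x
    - γ * (5 / 2) * iteratedDeriv 3 (F s) x
    + 3 / 2 * (iteratedDeriv 1 (F s) x * a s x + F s x * iteratedDeriv 1 (a s) x) - F s x * e s x)
  have hq0 : Continuous (Function.uncurry q0) := by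
    change Continuous fun q : ℝ × ℝ => q0 q.1 q.2
    fun_prop
  have hq1 : Continuous (Function.uncurry q1) := by
    change Continuous fun q : ℝ × ℝ => q1 q.1 q.2
    fun_prop
  have hq2 : Continuous (Function.uncurry q2) := by
    change Continuous fun q : ℝ × ℝ => q2 q.1 q.2
    fun_prop
  obtain ⟨C0, hC0⟩ := exists_bound_on_rectangle hq0 S (2 * Real.pi)
  obtain ⟨C1, hC1⟩ := exists_bound_on_rectangle hq1 S (2 * Real.pi)
  obtain ⟨C2, hC2⟩ := exists_bound_on_rectangle hq2 S (2 * Real.pi)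
  let C := max C0 (max C1 C2)
  let ε : ℝ → ℝ → ℝ := fun s x => iteratedDeriv 1 (w s) x ^ 2 + F s x * w s x ^ 2
  let ε' : ℝ → ℝ → ℝ := fun s x => 2 * (iteratedDeriv 1 (w s) x * iteratedDeriv 1 (h s) x)
    + (Fs s x * w s x ^ 2 + F s x * (2 * (w s x * h s x)))
  have hε : Continuous (Function.uncurry ε) := by
    change Continuous fun q : ℝ × ℝ => ε q.1 q.2
    fun_prop
  have hε' : Continuous (Function.uncurry ε') := by
    change Continuous fun q : ℝ × ℝ => ε' q.1 q.2
    fun_prop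
  have hεd (s x : ℝ) : HasDerivAt (fun σ => ε σ x) (ε' s x) s := by
    refine (((hev1 s x).pow 2).add ((hFt s x).mul ((hev s x).pow 2))).congr_deriv ?_
    simp only [ε', h, G, Pi.pow_apply]
    ring
  have hE := hasDerivAt_integral_of_continuous 0 (2 * Real.pi) hε hε' hεd
  have hEx {q : ℝ → ℝ → ℝ} (hq : Continuous (Function.uncurry q)) (s : ℝ) : Continuous (q s) :=
    hq.comp (Continuous.prodMk_right s)
  let Q : ℝ → ℝ → ℝ := fun s x => q0 s x * w s x ^ 2 + q1 s x * (w s x * iteratedDeriv 1 (w s) x)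
    + q2 s x * iteratedDeriv 1 (w s) x ^ 2
  have hQ : Continuous (Function.uncurry Q) := by
    change Continuous fun q : ℝ × ℝ => q0 q.1 q.2 * w q.1 q.2 ^ 2
      + q1 q.1 q.2 * (w q.1 q.2 * iteratedDeriv 1 (w q.1) q.2)
      + q2 q.1 q.2 * iteratedDeriv 1 (w q.1) q.2 ^ 2
    exact ((hq0.mul (hw0.pow 2)).add (hq1.mul (hw0.mul hw1))).add (hq2.mul (hw1.pow 2))
  have hflux (s : ℝ) : ∫ x in (0 : ℝ)..(2 * Real.pi), (ε' s x - Q s x) = 0 := by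
    have hX (x : ℝ) := hasDerivAt_energyFlux (γ := γ)
      (hw.hasDerivAt_iteratedDeriv_one (by norm_num) s x)
      (hw.hasDerivAt_iteratedDeriv (k := 1) (by norm_num) s x)
      (hw.hasDerivAt_iteratedDeriv (k := 2) (by norm_num) s x)
      (hw.hasDerivAt_iteratedDeriv (k := 3) (by norm_num) s x)
      (hw.hasDerivAt_iteratedDeriv (k := 4) (by norm_num) s x)
      (hF.hasDerivAt_iteratedDeriv_one (by norm_num) s x)
      (hF.hasDerivAt_iteratedDeriv (k := 1) (by norm_num) s x)
      (hF.hasDerivAt_iteratedDeriv (k := 2) (by norm_num) s x)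
      (hF.hasDerivAt_iteratedDeriv (k := 3) (by norm_num) s x)
      (ha.hasDerivAt_iteratedDeriv_one (by norm_num) s x)
      (ha.hasDerivAt_iteratedDeriv (k := 1) (by norm_num) s x)
      (he.hasDerivAt_iteratedDeriv_one (by norm_num) s x)
      (ha1.hasDerivAt_iteratedDeriv_one (by norm_num) s x)
      (ha0.hasDerivAt_iteratedDeriv_one (by norm_num) s x) (hbal s x)
    have hwh (x : ℝ) := (hw.hasDerivAt_iteratedDeriv (k := 1) (by norm_num) s x).mul
      (hh.hasDerivAt_iteratedDeriv_one (by norm_num) s x)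
    refine integral_eq_zero_of_periodic ?_
      (fun x => (((hwh x).const_mul 2).add ((hX x).const_mul (2 * κ s))).congr_deriv ?_)
      ((hEx hε' s).sub (hEx hQ s))
    · intro x
      have hhp : h s (x + 2 * Real.pi) = h s x := by
        simp only [h, G, hwp s x, hap s x, hep s x, ha1p s x, ha0p s x,
          periodic_iteratedDeriv (hwp s) _ x]
      simp only [Pi.add_apply, Pi.mul_apply, hhp, hwp s x, hFp s x, hap s x, hep s x, ha1p s x,
        ha0p s x, periodic_iteratedDeriv (hwp s) _ x, periodic_iteratedDeriv (hFp s) _ x,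
        periodic_iteratedDeriv (hap s) _ x]
    · simp only [ε', Q, q0, q1, q2, h, G]
      ring
  have hEle (s : ℝ) (hs : s ∈ Set.Icc 0 S) :
      ∫ x in (0 : ℝ)..(2 * Real.pi), ε' s x ≤ 2 * C * ∫ x in (0 : ℝ)..(2 * Real.pi), ε s x := by
    have hi := hflux s
    rw [intervalIntegral.integral_sub ((hEx hε' s).intervalIntegrable _ _)
      ((hEx hQ s).intervalIntegrable _ _), sub_eq_zero] at hi
    rw [hi, ← intervalIntegral.integral_const_mul]
    refine intervalIntegral.integral_mono_on hπ.le ((hEx hQ s).intervalIntegrable _ _)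
      (((hEx hε s).const_mul _).intervalIntegrable _ _) fun x hx => ?_
    exact quadraticForm_le ((hC0 s hs x hx).trans (le_max_left _ _))
      ((hC1 s hs x hx).trans ((le_max_left _ _).trans (le_max_right _ _)))
      ((hC2 s hs x hx).trans ((le_max_right _ _).trans (le_max_right _ _))) (hF1 s hs x hx)
  have hεnn (s : ℝ) (hs : s ∈ Set.Icc 0 S) (x : ℝ) (hx : x ∈ Set.Icc 0 (2 * Real.pi)) :
      w s x ^ 2 ≤ ε s x := by
    have := hF1 s hs x hx
    simp only [ε]
    nlinarith [sq_nonneg (w s x), sq_nonneg (iteratedDeriv 1 (w s) x)]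
  have hE0 := eq_zero_of_hasDerivAt_le hE
    (fun s hs => intervalIntegral.integral_nonneg hπ.le
      fun x hx => (sq_nonneg _).trans (hεnn s hs x hx)) hEle (by
      have hz : w 0 = fun _ => 0 := funext h0
      simp [ε, hz])
  intro s hs x hx
  by_contra hne
  have hpos : 0 < ε s x := lt_of_lt_of_le (by positivity) (hεnn s hs x hx)
  exact (intervalIntegral.integral_pos hπ (hEx hε s).continuousOn
    (fun y hy => (sq_nonneg _).trans (hεnn s hs y ⟨hy.1.le, hy.2⟩)) ⟨x, hx, hpos⟩).ne' (hE0 s hs)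

theorem JointCk.contDiff {P : Type*} [TopologicalSpace P] {n : ℕ} {f : P → ℝ → ℝ}
    (hf : JointCk n f) (p : P) : ContDiff ℝ n (f p) := by
  induction n generalizing f with
  | zero => exact contDiff_zero.2 (hf.continuous.comp (Continuous.prodMk_right p))
  | succ n ih =>
    push_cast
    exact contDiff_succ_iff_deriv.2 ⟨hf.2.1 p, by simp, ih hf.deriv⟩

/-- The polynomial `Σ_j μ_j y₃^{a_j} y₂^{b_j} y₁^{c_j} y₀^{d_j}`. -/
noncomputable def polyEval {j0 : ℕ} (μ : Fin j0 → ℝ) (a b c d : Fin j0 → ℕ) (y3 y2 y1 y0 : ℝ) :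
    ℝ :=
  ∑ j, μ j * y3 ^ a j * y2 ^ b j * y1 ^ c j * y0 ^ d j

section polyEval

variable {j0 : ℕ} (μ : Fin j0 → ℝ) (a b c d : Fin j0 → ℕ)

theorem hasDerivAt_polyEval {y3 y2 y1 y0 : ℝ → ℝ} {z3 z2 z1 z0 θ : ℝ} (h3 : HasDerivAt y3 z3 θ)
    (h2 : HasDerivAt y2 z2 θ) (h1 : HasDerivAt y1 z1 θ) (h0 : HasDerivAt y0 z0 θ) :
    HasDerivAt (fun τ => polyEval μ a b c d (y3 τ) (y2 τ) (y1 τ) (y0 τ))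
      (polyEval (fun j => μ j * a j) (fun j => a j - 1) b c d (y3 θ) (y2 θ) (y1 θ) (y0 θ) * z3
        + polyEval (fun j => μ j * b j) a (fun j => b j - 1) c d (y3 θ) (y2 θ) (y1 θ) (y0 θ) * z2
        + polyEval (fun j => μ j * c j) a b (fun j => c j - 1) d (y3 θ) (y2 θ) (y1 θ) (y0 θ) * z1
        + polyEval (fun j => μ j * d j) a b c (fun j => d j - 1) (y3 θ) (y2 θ) (y1 θ) (y0 θ) * z0)
      θ := by
  unfold polyEval
  refine (HasDerivAt.fun_sum fun j _ =>
    (((((h3.pow (a j)).const_mul (μ j)).mul (h2.pow (b j))).mul (h1.pow (c j))).mul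
      (h0.pow (d j)))).congr_deriv ?_
  simp only [Finset.sum_mul, ← Finset.sum_add_distrib]
  refine Finset.sum_congr rfl fun j _ => ?_
  simp only [Pi.mul_apply, Pi.pow_apply]
  ring

theorem JointCk.polyEval {P : Type*} [TopologicalSpace P] {n : ℕ} {y3 y2 y1 y0 : P → ℝ → ℝ}
    (h3 : JointCk n y3) (h2 : JointCk n y2) (h1 : JointCk n y1) (h0 : JointCk n y0) :
    JointCk n (fun p x => polyEval μ a b c d (y3 p x) (y2 p x) (y1 p x) (y0 p x)) := by
  unfold FifthOrderStmt1.polyEval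
  exact JointCk.sum _ fun j => ((((h3.pow (a j)).const_mul (μ j)).mul (h2.pow (b j))).mul
    (h1.pow (c j))).mul (h0.pow (d j))

theorem Nfun_eq_polyEval (f : ℝ → ℝ) (x : ℝ) : Nfun j0 μ a b c d f x =
    polyEval μ a b c d (iteratedDeriv 3 f x) (iteratedDeriv 2 f x) (iteratedDeriv 1 f x) (f x) := by
  simp [Nfun, polyEval, iteratedDeriv_one]

/-- The value of a polynomial in the first derivatives of `g + θ (f - g)`, averaged over
`θ ∈ [0, 1]`. -/
noncomputable def segmentAverage (f g : ℝ → ℝ → ℝ) (s x : ℝ) : ℝ :=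
  ∫ θ in (0 : ℝ)..1, polyEval μ a b c d
    (iteratedDeriv 3 (g s) x + θ * (iteratedDeriv 3 (f s) x - iteratedDeriv 3 (g s) x))
    (iteratedDeriv 2 (g s) x + θ * (iteratedDeriv 2 (f s) x - iteratedDeriv 2 (g s) x))
    (iteratedDeriv 1 (g s) x + θ * (iteratedDeriv 1 (f s) x - iteratedDeriv 1 (g s) x))
    (iteratedDeriv 0 (g s) x + θ * (iteratedDeriv 0 (f s) x - iteratedDeriv 0 (g s) x))

theorem JointCk.segment {P : Type*} [TopologicalSpace P] {n : ℕ} {f g : P → ℝ → ℝ}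
    (hf : JointCk n f) (hg : JointCk n g) :
    JointCk n (fun (p : P × ℝ) x => g p.1 x + p.2 * (f p.1 x - g p.1 x)) :=
  (hg.comp_param continuous_fst).add ((JointCk.of_param continuous_snd).mul
    ((hf.comp_param continuous_fst).sub (hg.comp_param continuous_fst)))

theorem jointCk_segmentAverage {n : ℕ} {f g : ℝ → ℝ → ℝ} (hf : JointCk (n + 3) f)
    (hg : JointCk (n + 3) g) : JointCk n (segmentAverage μ a b c d f g) :=
  JointCk.integral (P := ℝ) (α := fun _ => 0) (β := fun _ => 1)
    (JointCk.polyEval μ a b c d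
      ((hf.iteratedDeriv n (by omega)).segment (hg.iteratedDeriv n (by omega)))
      ((hf.iteratedDeriv n (by omega)).segment (hg.iteratedDeriv n (by omega)))
      ((hf.iteratedDeriv n (by omega)).segment (hg.iteratedDeriv n (by omega)))
      ((hf.iteratedDeriv n (by omega)).segment (hg.iteratedDeriv n (by omega))))
    continuous_const continuous_const

theorem jointCk_segmentAverage_time {n : ℕ} {f g : ℝ → ℝ → ℝ}
    (hf : ∀ k ≤ 3, JointCk n (fun x s => iteratedDeriv k (f s) x))
    (hg : ∀ k ≤ 3, JointCk n (fun x s => iteratedDeriv k (g s) x)) :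
    JointCk n (fun x s => segmentAverage μ a b c d f g s x) :=
  JointCk.integral (P := ℝ) (α := fun _ => 0) (β := fun _ => 1)
    (JointCk.polyEval μ a b c d
      ((hf 3 (by norm_num)).segment (hg 3 (by norm_num)))
      ((hf 2 (by norm_num)).segment (hg 2 (by norm_num)))
      ((hf 1 (by norm_num)).segment (hg 1 (by norm_num)))
      ((hf 0 (by norm_num)).segment (hg 0 (by norm_num))))
    continuous_const continuous_const

theorem periodic_segmentAverage {f g : ℝ → ℝ → ℝ} {L : ℝ} (hf : ∀ s, Function.Periodic (f s) L)
    (hg : ∀ s, Function.Periodic (g s) L) (s : ℝ) :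
    Function.Periodic (segmentAverage μ a b c d f g s) L := by
  intro x
  simp only [segmentAverage, periodic_iteratedDeriv (hf s) _ x, periodic_iteratedDeriv (hg s) _ x]

/-- The increment of the nonlinearity is linear in the increments of its arguments. -/
theorem polyEval_sub_eq (f g : ℝ → ℝ → ℝ) (s x : ℝ) :
    polyEval μ a b c d (iteratedDeriv 3 (f s) x) (iteratedDeriv 2 (f s) x)
        (iteratedDeriv 1 (f s) x) (iteratedDeriv 0 (f s) x)
      - polyEval μ a b c d (iteratedDeriv 3 (g s) x) (iteratedDeriv 2 (g s) x)
        (iteratedDeriv 1 (g s) x) (iteratedDeriv 0 (g s) x)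
    = segmentAverage (fun j => μ j * a j) (fun j => a j - 1) b c d f g s x
        * (iteratedDeriv 3 (f s) x - iteratedDeriv 3 (g s) x)
      + segmentAverage (fun j => μ j * b j) a (fun j => b j - 1) c d f g s x
        * (iteratedDeriv 2 (f s) x - iteratedDeriv 2 (g s) x)
      + segmentAverage (fun j => μ j * c j) a b (fun j => c j - 1) d f g s x
        * (iteratedDeriv 1 (f s) x - iteratedDeriv 1 (g s) x)
      + segmentAverage (fun j => μ j * d j) a b c (fun j => d j - 1) f g s x
        * (iteratedDeriv 0 (f s) x - iteratedDeriv 0 (g s) x) := by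
  have hseg (p q θ : ℝ) : HasDerivAt (fun τ : ℝ => q + τ * (p - q)) (p - q) θ := by
    simpa using ((hasDerivAt_id θ).mul_const (p - q)).const_add q
  have hd (θ : ℝ) := hasDerivAt_polyEval μ a b c d
    (hseg (iteratedDeriv 3 (f s) x) (iteratedDeriv 3 (g s) x) θ)
    (hseg (iteratedDeriv 2 (f s) x) (iteratedDeriv 2 (g s) x) θ)
    (hseg (iteratedDeriv 1 (f s) x) (iteratedDeriv 1 (g s) x) θ)
    (hseg (iteratedDeriv 0 (f s) x) (iteratedDeriv 0 (g s) x) θ)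
  have hc (ν : Fin j0 → ℝ) (a b c d : Fin j0 → ℕ) (z : ℝ) : IntervalIntegrable (fun θ : ℝ =>
      polyEval ν a b c d
      (iteratedDeriv 3 (g s) x + θ * (iteratedDeriv 3 (f s) x - iteratedDeriv 3 (g s) x))
      (iteratedDeriv 2 (g s) x + θ * (iteratedDeriv 2 (f s) x - iteratedDeriv 2 (g s) x))
      (iteratedDeriv 1 (g s) x + θ * (iteratedDeriv 1 (f s) x - iteratedDeriv 1 (g s) x))
      (iteratedDeriv 0 (g s) x + θ * (iteratedDeriv 0 (f s) x - iteratedDeriv 0 (g s) x)) * z)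
      MeasureTheory.volume 0 1 := by
    apply Continuous.intervalIntegrable
    unfold polyEval
    fun_prop
  have h := intervalIntegral.integral_eq_sub_of_hasDerivAt (a := 0) (b := 1) (fun θ _ => hd θ)
    ((((hc _ _ _ _ _ _).add (hc _ _ _ _ _ _)).add (hc _ _ _ _ _ _)).add (hc _ _ _ _ _ _))
  rw [intervalIntegral.integral_add (((hc _ _ _ _ _ _).add (hc _ _ _ _ _ _)).add
      (hc _ _ _ _ _ _)) (hc _ _ _ _ _ _),
    intervalIntegral.integral_add ((hc _ _ _ _ _ _).add (hc _ _ _ _ _ _)) (hc _ _ _ _ _ _),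
    intervalIntegral.integral_add (hc _ _ _ _ _ _) (hc _ _ _ _ _ _)] at h
  simp only [intervalIntegral.integral_mul_const] at h
  simp only [segmentAverage]
  rw [h]
  simp

end polyEval

/-- Existence of the periodic weight balancing the coefficients `a` and `e`. -/
theorem exists_energyWeight {γ : ℝ} (hγ : γ ≠ 0) (S : ℝ) {a e : ℝ → ℝ → ℝ}
    (ha : JointCk 4 a) (he : JointCk 3 e)
    (hap : ∀ s, Function.Periodic (a s) (2 * Real.pi))
    (hep : ∀ s, Function.Periodic (e s) (2 * Real.pi))
    (hat : JointCk 1 (fun x s => a s x)) (het : JointCk 1 (fun x s => e s x))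
    (hmean : ∀ s, ∫ x in (0 : ℝ)..(2 * Real.pi), e s x = 0) :
    ∃ F Fs : ℝ → ℝ → ℝ, JointCk 4 F ∧ (∀ s, Function.Periodic (F s) (2 * Real.pi)) ∧
      Continuous (Function.uncurry Fs) ∧ (∀ s x, HasDerivAt (fun σ => F σ x) (Fs s x) s) ∧
      (∀ s x, 5 * γ / 2 * iteratedDeriv 1 (F s) x = e s x - 1 / 2 * iteratedDeriv 1 (a s) x) ∧
      ∀ s ∈ Set.Icc 0 S, ∀ x ∈ Set.Icc 0 (2 * Real.pi), 1 ≤ F s x := by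
  have hes (s : ℝ) : Continuous (e s) := he.continuous.comp (Continuous.prodMk_right s)
  let F0 : ℝ → ℝ → ℝ := fun s x => 2 / (5 * γ) * ((∫ y in (0 : ℝ)..x, e s y) - 1 / 2 * a s x)
  have hd (s x : ℝ) : HasDerivAt (F0 s) (2 / (5 * γ) * (e s x - 1 / 2 * deriv (a s) x)) x :=
    ((((hes s).integral_hasStrictDerivAt 0 x).hasDerivAt).sub
      ((ha.hasDerivAt s x).const_mul (1 / 2))).const_mul _
  have hc : Continuous (Function.uncurry F0) := by
    have h1 : Continuous fun q : ℝ × ℝ => ∫ y in (0 : ℝ)..q.2, e q.1 y :=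
      continuous_integral_of_continuous (X := ℝ × ℝ) (f := fun q y => e q.1 y)
        (he.continuous.comp (by fun_prop : Continuous fun q : (ℝ × ℝ) × ℝ => (q.1.1, q.2)))
        continuous_const continuous_snd
    exact (h1.sub (ha.continuous.const_mul (1 / 2))).const_mul _
  have hF0 : JointCk 4 F0 :=
    JointCk.of_hasDerivAt hc hd ((he.sub (ha.deriv.const_mul (1 / 2))).const_mul _)
  have hF0t : JointCk 1 (fun x s => F0 s x) :=
    ((JointCk.integral (P := ℝ) (f := fun p s => e s p.2) (α := fun _ => 0) (β := id)
      (het.comp_param continuous_snd) continuous_const continuous_id).sub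
      (hat.const_mul (1 / 2))).const_mul _
  obtain ⟨C, hC⟩ := exists_bound_on_rectangle hc S (2 * Real.pi)
  have hFd (s x : ℝ) : HasDerivAt (fun y => F0 s y + (C + 1))
      (2 / (5 * γ) * (e s x - 1 / 2 * deriv (a s) x)) x := (hd s x).add_const _
  refine ⟨fun s x => F0 s x + (C + 1), fun s x => deriv (fun σ => F0 σ x) s,
    hF0.add (JointCk.of_param continuous_const), fun s x => ?_, ?_, fun s x => ?_, fun s x => ?_,
    fun s hs x hx => ?_⟩
  · have hi (u v : ℝ) : IntervalIntegrable (e s) MeasureTheory.volume u v :=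
      (hes s).intervalIntegrable u v
    have : ∫ y in (0 : ℝ)..(x + 2 * Real.pi), e s y = ∫ y in (0 : ℝ)..x, e s y := by
      have h := hmean s
      rw [(hep s).intervalIntegral_add_eq_add 0 x hi, zero_add, h, add_zero]
    simp only [F0, this, hap s x]
  · exact hF0t.deriv.continuous.comp continuous_swap
  · exact (hF0t.hasDerivAt x s).add_const _
  · rw [iteratedDeriv_one, iteratedDeriv_one, (hFd s x).deriv]
    field_simp
  · have := neg_le_of_abs_le (hC s hs x hx)
    linarith

/-- Uniqueness for the nonlinear evolution, for classical solutions. -/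
theorem eq_of_evolution {γ0 γ1 γ2 S : ℝ} (hγ0 : γ0 ≠ 0) {j0 : ℕ} {lam : Fin j0 → ℝ}
    {a b c d : Fin j0 → ℕ} {κ : ℝ → ℝ} {f g : ℝ → ℝ → ℝ} (hκ : Continuous κ)
    (hf : JointCk 10 f) (hg : JointCk 10 g) (hfp : ∀ s, Function.Periodic (f s) (2 * Real.pi))
    (hgp : ∀ s, Function.Periodic (g s) (2 * Real.pi))
    (hfev : ∀ s x, HasDerivAt (fun σ => f σ x) (κ s * (-γ0 * iteratedDeriv 5 (f s) x
      - γ1 * iteratedDeriv 3 (f s) x - γ2 * iteratedDeriv 1 (f s) x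
      + Nfun j0 lam a b c d (f s) x)) s)
    (hgev : ∀ s x, HasDerivAt (fun σ => g σ x) (κ s * (-γ0 * iteratedDeriv 5 (g s) x
      - γ1 * iteratedDeriv 3 (g s) x - γ2 * iteratedDeriv 1 (g s) x
      + Nfun j0 lam a b c d (g s) x)) s)
    (hmean : ∀ s, ∫ x in (0 : ℝ)..(2 * Real.pi),
      segmentAverage (fun j => lam j * b j) a (fun j => b j - 1) c d f g s x = 0)
    (h0 : ∀ x, f 0 x = g 0 x) :
    ∀ s ∈ Set.Icc 0 S, ∀ x ∈ Set.Icc 0 (2 * Real.pi), f s x = g s x := by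
  have htime {v : ℝ → ℝ → ℝ} (hv : JointCk 10 v)
      (hev : ∀ s x, HasDerivAt (fun σ => v σ x) (κ s * (-γ0 * iteratedDeriv 5 (v s) x
        - γ1 * iteratedDeriv 3 (v s) x - γ2 * iteratedDeriv 1 (v s) x
        + Nfun j0 lam a b c d (v s) x)) s) :
      ∀ k ≤ 3, JointCk 1 (fun x s => iteratedDeriv k (v s) x) := by
    intro k hk
    have hh : JointCk 5 (fun s x => κ s * (-γ0 * iteratedDeriv 5 (v s) x
        - γ1 * iteratedDeriv 3 (v s) x - γ2 * iteratedDeriv 1 (v s) x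
        + Nfun j0 lam a b c d (v s) x)) := by
      simp only [Nfun_eq_polyEval]
      exact (JointCk.of_param hκ).mul (((((hv.iteratedDeriv 5 (by norm_num)).const_mul (-γ0)).sub
        ((hv.iteratedDeriv 5 (by norm_num)).const_mul γ1)).sub
        ((hv.iteratedDeriv 5 (by norm_num)).const_mul γ2)).add
        (JointCk.polyEval lam a b c d (hv.iteratedDeriv 5 (by norm_num))
          (hv.iteratedDeriv 5 (by norm_num)) (hv.iteratedDeriv 5 (by norm_num))
          (hv.mono (by norm_num))))
    refine JointCk.of_hasDerivAt
      ((hv.continuous_iteratedDeriv (k := k) (by omega)).comp continuous_swap)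
      (fun x s => hasDerivAt_iteratedDeriv_of_evolution (hv.mono (by omega)) (hh.mono (by omega))
        hev s x) ?_
    exact (hh.continuous_iteratedDeriv (k := k) (by omega)).comp continuous_swap
  have hft := htime hf hfev
  have hgt := htime hg hgev
  have hA (μ : Fin j0 → ℝ) (a b c d : Fin j0 → ℕ) : JointCk 7 (segmentAverage μ a b c d f g) :=
    jointCk_segmentAverage μ a b c d hf hg
  have hAt (μ : Fin j0 → ℝ) (a b c d : Fin j0 → ℕ) :=
    jointCk_segmentAverage_time μ a b c d hft hgt
  have hAp (μ : Fin j0 → ℝ) (a b c d : Fin j0 → ℕ) := periodic_segmentAverage μ a b c d hfp hgp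
  have hconst (z : ℝ) {P : Type} [TopologicalSpace P] (n : ℕ) :
      JointCk n (fun (_ : P) (_ : ℝ) => z) := JointCk.of_param continuous_const
  have hshift {q : ℝ → ℝ} (hq : Function.Periodic q (2 * Real.pi)) (z : ℝ) :
      Function.Periodic (fun x => q x - z) (2 * Real.pi) := fun x => by simp only [hq x]
  obtain ⟨F, Fs, hF, hFp, hFs, hFt, hbal, hF1⟩ := exists_energyWeight hγ0 S
    (a := fun s x => segmentAverage (fun j => lam j * a j) (fun j => a j - 1) b c d f g s x - γ1)
    (((hA _ _ _ _ _).mono (by norm_num)).sub (hconst γ1 _)) ((hA _ _ _ _ _).mono (by norm_num))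
    (fun s => hshift (hAp _ _ _ _ _ s) γ1) (hAp _ _ _ _ _) ((hAt _ _ _ _ _).sub (hconst γ1 _))
    (hAt _ _ _ _ _) hmean
  have hsub (k : ℕ) (hk : k ≤ 10) (s x : ℝ) : iteratedDeriv k (fun y => f s y - g s y) x
      = iteratedDeriv k (f s) x - iteratedDeriv k (g s) x :=
    iteratedDeriv_sub (((hf.mono hk).contDiff s).contDiffAt) (((hg.mono hk).contDiff s).contDiffAt)
  intro s hs x hx
  rw [← sub_eq_zero]
  refine eq_zero_of_linear_evolution (γ := γ0) (κ := κ) (w := fun s x => f s x - g s x) hκ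
    ((hf.sub hg).mono (by norm_num)) (fun s x => by simp only [hfp s x, hgp s x]) hF hFp
    (((hA _ _ _ _ _).mono (by norm_num)).sub (hconst γ1 _))
    (fun s => hshift (hAp _ _ _ _ _ s) γ1) ((hA _ _ _ _ _).mono (by norm_num)) (hAp _ _ _ _ _)
    (a1 := fun s x => segmentAverage (fun j => lam j * c j) a b (fun j => c j - 1) d f g s x - γ2)
    (((hA _ _ _ _ _).mono (by norm_num)).sub (hconst γ2 _))
    (fun s => hshift (hAp _ _ _ _ _ s) γ2)
    (a0 := segmentAverage (fun j => lam j * d j) a b c (fun j => d j - 1) f g)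
    ((hA _ _ _ _ _).mono (by norm_num)) (hAp _ _ _ _ _) hFs hFt hbal ?_ hF1
    (fun x => by rw [h0 x, sub_self]) s hs x hx
  intro s x
  refine ((hfev s x).sub (hgev s x)).congr_deriv ?_
  have hN := polyEval_sub_eq lam a b c d f g s x
  simp only [iteratedDeriv_zero] at hN
  rw [hsub 5 (by norm_num), hsub 3 (by norm_num), hsub 2 (by norm_num), hsub 1 (by norm_num),
    Nfun_eq_polyEval, Nfun_eq_polyEval]
  linear_combination (κ s) * hN

/-- The `m`-th derivative of the real part of the Fourier mode `c * exp (i k x)`. -/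
noncomputable def mode (m : ℕ) (c : ℂ) (k : ℤ) (x : ℝ) : ℝ :=
  ((Complex.I * k) ^ m * c * Complex.exp (Complex.I * k * x)).re

theorem hasDerivAt_mode (m : ℕ) (c : ℂ) (k : ℤ) (x : ℝ) :
    HasDerivAt (mode m c k) (mode (m + 1) c k x) x := by
  have h1 : HasDerivAt (fun y : ℝ => Complex.I * k * (y : ℂ)) (Complex.I * k) x := by
    simpa using (Complex.ofRealCLM.hasDerivAt (x := x)).const_mul (Complex.I * (k : ℂ))
  have h2 := (h1.cexp.const_mul ((Complex.I * k) ^ m * c))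
  have h3 := Complex.reCLM.hasFDerivAt.comp_hasDerivAt x h2
  have h4 : mode (m + 1) c k x = Complex.reCLM ((Complex.I * k) ^ m * c *
      (Complex.exp (Complex.I * k * x) * (Complex.I * k))) := by
    simp only [mode, Complex.reCLM_apply]
    congr 1
    ring
  rw [h4]
  exact h3

theorem abs_mode_le (m : ℕ) (c : ℂ) (k : ℤ) (x : ℝ) : |mode m c k x| ≤ |(k : ℝ)| ^ m * ‖c‖ := by
  refine (Complex.abs_re_le_norm _).trans (le_of_eq ?_)
  have : ‖Complex.exp (Complex.I * k * x)‖ = 1 := by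
    rw [show Complex.I * (k : ℂ) * (x : ℂ) = ((k * x : ℝ) : ℂ) * Complex.I by push_cast; ring]
    exact Complex.norm_exp_ofReal_mul_I _
  rw [norm_mul, norm_mul, this, norm_pow, norm_mul, Complex.norm_I, Complex.norm_intCast]
  simp

theorem periodic_mode (m : ℕ) (c : ℂ) (k : ℤ) : Function.Periodic (mode m c k) (2 * Real.pi) := by
  intro x
  simp only [mode]
  congr 2
  rw [show Complex.I * (k : ℂ) * ((x + 2 * Real.pi : ℝ) : ℂ) =
    Complex.I * k * x + k * (2 * Real.pi * Complex.I) by push_cast; ring]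
  exact Complex.exp_periodic.int_mul k _

theorem continuous_mode_uncurry {P : Type*} [TopologicalSpace P] (m : ℕ) {c : P → ℂ}
    (hc : Continuous c) (k : ℤ) : Continuous (fun q : P × ℝ => mode m (c q.1) k q.2) := by
  unfold mode
  fun_prop

theorem summable_inv_one_add_sq : Summable (fun k : ℤ => (1 + (k : ℝ) ^ 2)⁻¹) := by
  refine Summable.of_norm_bounded_eventually (g := fun k : ℤ => 1 / (k : ℝ) ^ 2)
    (Real.summable_one_div_int_pow.mpr one_lt_two) ?_
  filter_upwards [(Set.finite_singleton (0 : ℤ)).compl_mem_cofinite] with k hk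
  have hk0 : (k : ℝ) ≠ 0 := by exact_mod_cast hk
  have : 0 < (k : ℝ) ^ 2 := by positivity
  rw [Real.norm_of_nonneg (by positivity), ← one_div]
  exact one_div_le_one_div_of_le this (by linarith)

theorem abs_mode_le_of_decay {m : ℕ} (hm : m ≤ 10) {c : ℂ} {k : ℤ} {M : ℝ}
    (hc : ‖c‖ ≤ M * ((1 + (k : ℝ) ^ 2) ^ 6)⁻¹) (x : ℝ) :
    |mode m c k x| ≤ M * (1 + (k : ℝ) ^ 2)⁻¹ := by
  have hpos : (0 : ℝ) < 1 + (k : ℝ) ^ 2 := by positivity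
  have hk : |(k : ℝ)| ^ m ≤ (1 + (k : ℝ) ^ 2) ^ 5 := by
    rcases le_total |(k : ℝ)| 1 with h | h
    · exact (pow_le_one₀ (abs_nonneg _) h).trans (one_le_pow₀ (by nlinarith [sq_nonneg (k : ℝ)]))
    · calc |(k : ℝ)| ^ m ≤ |(k : ℝ)| ^ 10 := pow_le_pow_right₀ h hm
        _ = ((k : ℝ) ^ 2) ^ 5 := by rw [← sq_abs (k : ℝ), ← pow_mul]
        _ ≤ _ := pow_le_pow_left₀ (sq_nonneg _) (by linarith) 5
  calc |mode m c k x| ≤ |(k : ℝ)| ^ m * ‖c‖ := abs_mode_le m c k x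
    _ ≤ (1 + (k : ℝ) ^ 2) ^ 5 * (M * ((1 + (k : ℝ) ^ 2) ^ 6)⁻¹) :=
        mul_le_mul hk hc (norm_nonneg _) (by positivity)
    _ = M * (1 + (k : ℝ) ^ 2)⁻¹ := by field_simp

section Series

variable {P : Type*} {c : P → ℤ → ℂ} {M : ℝ}

theorem summable_mode (hM : ∀ p k, ‖c p k‖ ≤ M * ((1 + (k : ℝ) ^ 2) ^ 6)⁻¹) {m : ℕ} (hm : m ≤ 10)
    (p : P) (x : ℝ) : Summable (fun k => mode m (c p k) k x) :=
  Summable.of_norm_bounded (summable_inv_one_add_sq.mul_left M)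
    (fun k => abs_mode_le_of_decay hm (hM p k) x)

theorem continuous_tsum_mode [TopologicalSpace P] (hc : ∀ k, Continuous (fun p => c p k))
    (hM : ∀ p k, ‖c p k‖ ≤ M * ((1 + (k : ℝ) ^ 2) ^ 6)⁻¹) {m : ℕ} (hm : m ≤ 10) :
    Continuous (Function.uncurry (fun p x => ∑' k, mode m (c p k) k x)) :=
  continuous_tsum (fun k => continuous_mode_uncurry m (hc k) k)
    (summable_inv_one_add_sq.mul_left M) (fun k q => abs_mode_le_of_decay hm (hM q.1 k) q.2)

theorem hasDerivAt_tsum_mode (hM : ∀ p k, ‖c p k‖ ≤ M * ((1 + (k : ℝ) ^ 2) ^ 6)⁻¹) {m : ℕ}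
    (hm : m + 1 ≤ 10) (p : P) (x : ℝ) :
    HasDerivAt (fun y => ∑' k, mode m (c p k) k y) (∑' k, mode (m + 1) (c p k) k x) x :=
  hasDerivAt_tsum (summable_inv_one_add_sq.mul_left M)
    (fun k y => hasDerivAt_mode m (c p k) k y)
    (fun k y => abs_mode_le_of_decay hm (hM p k) y)
    (summable_mode hM (Nat.le_of_succ_le hm) p 0) x

theorem jointCk_tsum_mode [TopologicalSpace P] (hc : ∀ k, Continuous (fun p => c p k))
    (hM : ∀ p k, ‖c p k‖ ≤ M * ((1 + (k : ℝ) ^ 2) ^ 6)⁻¹) (n m : ℕ) (h : n + m ≤ 10) :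
    JointCk n (fun p x => ∑' k, mode m (c p k) k x) := by
  induction n generalizing m with
  | zero => exact continuous_tsum_mode hc hM (by omega)
  | succ n ih =>
    exact JointCk.of_hasDerivAt (continuous_tsum_mode hc hM (by omega))
      (hasDerivAt_tsum_mode hM (by omega)) (ih (m + 1) (by omega))

theorem iteratedDeriv_tsum_mode (hM : ∀ p k, ‖c p k‖ ≤ M * ((1 + (k : ℝ) ^ 2) ^ 6)⁻¹) (p : P)
    {m : ℕ} (hm : m ≤ 10) :
    iteratedDeriv m (fun x => ∑' k, mode 0 (c p k) k x) = fun x => ∑' k, mode m (c p k) k x := by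
  induction m with
  | zero => simp
  | succ m ih =>
    rw [iteratedDeriv_succ, ih (by omega)]
    ext x
    exact (hasDerivAt_tsum_mode hM hm p x).deriv

end Series

theorem hasDerivAt_sum_mode (S : Finset ℤ) (c : ℤ → ℂ) (m : ℕ) (x : ℝ) :
    HasDerivAt (fun y => ∑ k ∈ S, mode m (c k) k y) (∑ k ∈ S, mode (m + 1) (c k) k x) x :=
  HasDerivAt.fun_sum fun k _ => hasDerivAt_mode m (c k) k x

theorem iteratedDeriv_sum_mode (S : Finset ℤ) (c : ℤ → ℂ) (m : ℕ) :
    iteratedDeriv m (fun y => ∑ k ∈ S, mode 0 (c k) k y) = fun y => ∑ k ∈ S, mode m (c k) k y := by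
  induction m with
  | zero => simp
  | succ m ih =>
    rw [iteratedDeriv_succ, ih]
    ext x
    exact (hasDerivAt_sum_mode S c m x).deriv

theorem contDiff_sum_mode (S : Finset ℤ) (c : ℤ → ℂ) :
    ContDiff ℝ (⊤ : ℕ∞) (fun y => ∑ k ∈ S, mode 0 (c k) k y) := by
  refine contDiff_of_differentiable_iteratedDeriv fun m _ => ?_
  rw [iteratedDeriv_sum_mode]
  exact fun x => (hasDerivAt_sum_mode S c m x).differentiableAt

theorem hasSum_mode_fc {f : ℝ → ℝ} (hf : Continuous f) (hp : Function.Periodic f (2 * Real.pi))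
    (hs : Summable (fc f)) (x : ℝ) : HasSum (fun k => mode 0 (fc f k) k x) (f x) := by
  have : Fact (0 < 2 * Real.pi) := ⟨Real.two_pi_pos⟩
  have hpC : Function.Periodic (fun y => (f y : ℂ)) (2 * Real.pi) := fun y => by simp [hp y]
  let F : C(AddCircle (2 * Real.pi), ℂ) := ⟨hpC.lift, by
    exact continuous_coinduced_dom.mpr (Complex.continuous_ofReal.comp hf)⟩
  have hF (y : ℝ) : F (y : AddCircle (2 * Real.pi)) = (f y : ℂ) := hpC.lift_coe y
  have hcoef (k : ℤ) : fourierCoeff F k = fc f k := by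
    rw [fourierCoeff_eq_intervalIntegral F k 0, fc, zero_add]
    rw [Complex.real_smul]
    push_cast
    rw [one_div]
    congr 1
    refine intervalIntegral.integral_congr fun y _ => ?_
    simp only [hF, fourier_coe_apply, smul_eq_mul]
    rw [mul_comm]
    congr 2
    push_cast
    field_simp
  have h := has_pointwise_sum_fourier_series_of_summable (f := F) (by simpa only [hcoef, funext hcoef] using hs) (x : AddCircle (2 * Real.pi))
  rw [hF] at h
  have h2 := Complex.hasSum_re h
  simp only [Complex.ofReal_re] at h2
  convert h2 using 2 with k
  rw [hcoef, mode, fourier_coe_apply, smul_eq_mul]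
  congr 1
  rw [pow_zero, one_mul]
  congr 2
  push_cast
  field_simp

theorem norm_fc_le_of_hsNorm_le {f : ℝ → ℝ} {M : ℝ} (hf : MemHs 12 f) (hM : hsNorm 12 f ≤ M) (k : ℤ) :
    ‖fc f k‖ ≤ M * ((1 + (k : ℝ) ^ 2) ^ 6)⁻¹ := by
  have h1 : (1 + (k : ℝ) ^ 2) ^ 12 * ‖fc f k‖ ^ 2 ≤ (hsNorm 12 f) ^ 2 := by
    rw [hsNorm, Real.sq_sqrt (tsum_nonneg fun k => by positivity)]
    exact hf.2.2.le_tsum k fun j _ => by positivity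
  have h2 : (1 + (k : ℝ) ^ 2) ^ 6 * ‖fc f k‖ ≤ hsNorm 12 f := by
    refine le_of_sq_le_sq ?_ (Real.sqrt_nonneg _)
    calc ((1 + (k : ℝ) ^ 2) ^ 6 * ‖fc f k‖) ^ 2 = (1 + (k : ℝ) ^ 2) ^ 12 * ‖fc f k‖ ^ 2 := by ring
      _ ≤ _ := h1
  rw [← div_eq_mul_inv, le_div_iff₀ (by positivity), mul_comm]
  exact h2.trans hM

theorem fc_sub {f g : ℝ → ℝ} (hf : Continuous f) (hg : Continuous g) (k : ℤ) :
    fc (fun x => f x - g x) k = fc f k - fc g k := by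
  unfold fc
  rw [← mul_sub, ← intervalIntegral.integral_sub]
  · congr 1
    refine intervalIntegral.integral_congr fun x _ => ?_
    push_cast
    ring
  all_goals exact Continuous.intervalIntegrable (by fun_prop) _ _

theorem summable_fc_of_decay {f : ℝ → ℝ} {M : ℝ}
    (hM : ∀ k, ‖fc f k‖ ≤ M * ((1 + (k : ℝ) ^ 2) ^ 6)⁻¹) : Summable (fc f) := by
  refine Summable.of_norm_bounded (summable_inv_one_add_sq.mul_left M) fun k => ?_
  refine (hM k).trans ?_
  have hM0 : 0 ≤ M := by
    have := (norm_nonneg _).trans (hM 0)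
    simpa using this
  refine mul_le_mul_of_nonneg_left (inv_anti₀ (by positivity) ?_) hM0
  exact le_self_pow₀ (by nlinarith [sq_nonneg (k : ℝ)]) (by norm_num)

theorem continuousOn_fc {A : Set ℝ} {u : ℝ → ℝ → ℝ} (hmem : ∀ t ∈ A, MemHs 12 (u t))
    (hcont : ContInHs 0 A u) (k : ℤ) : ContinuousOn (fun t => fc (u t) k) A := by
  have hs (t : ℝ) (ht : t ∈ A) : Summable fun j : ℤ => ‖fc (u t) j‖ ^ 2 := by
    refine Summable.of_nonneg_of_le (fun _ => by positivity) (fun j => ?_) (hmem t ht).2.2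
    exact le_mul_of_one_le_left (by positivity) (one_le_pow₀ (by nlinarith [sq_nonneg (j : ℝ)]))
  rw [Metric.continuousOn_iff]
  intro t₀ ht₀ ε hε
  obtain ⟨δ, hδ, H⟩ := hcont t₀ ht₀ ε hε
  refine ⟨δ, hδ, fun t ht htd => lt_of_le_of_lt ?_ (H t ht htd)⟩
  have hd (j : ℤ) := fc_sub (hmem t ht).1 (hmem t₀ ht₀).1 j
  rw [dist_eq_norm, hsNorm]
  refine Real.le_sqrt_of_sq_le ?_
  simp only [hd, pow_zero, one_mul]
  have hsum : Summable fun j : ℤ => ‖fc (u t) j - fc (u t₀) j‖ ^ 2 := by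
    refine Summable.of_nonneg_of_le (fun _ => by positivity) (fun j => ?_)
      (((hs t ht).add (hs t₀ ht₀)).mul_left 2)
    have h1 := norm_sub_le (fc (u t) j) (fc (u t₀) j)
    nlinarith [norm_nonneg (fc (u t) j - fc (u t₀) j),
      sq_nonneg (‖fc (u t) j‖ - ‖fc (u t₀) j‖)]
  exact hsum.le_tsum k fun j _ => by positivity

theorem eq_tsum_mode_fc {f : ℝ → ℝ} {M : ℝ} (hf : MemHs 12 f) (hM : hsNorm 12 f ≤ M) :
    f = fun x => ∑' k, mode 0 (fc f k) k x := by
  ext x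
  exact (hasSum_mode_fc hf.1 hf.2.1
    (summable_fc_of_decay (norm_fc_le_of_hsNorm_le hf hM)) x).tsum_eq.symm

theorem hasSum_iteratedDeriv_mode_fc {f : ℝ → ℝ} {M : ℝ} (hf : MemHs 12 f)
    (hM : hsNorm 12 f ≤ M) {m : ℕ} (hm : m ≤ 10) (x : ℝ) :
    HasSum (fun k => mode m (fc f k) k x) (iteratedDeriv m f x) := by
  have hdec := norm_fc_le_of_hsNorm_le hf hM
  have h := iteratedDeriv_tsum_mode (P := Unit) (c := fun _ => fc f) (fun _ => hdec) () hm
  rw [← eq_tsum_mode_fc hf hM] at h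
  rw [h]
  exact (summable_mode (P := Unit) (c := fun _ => fc f) (fun _ => hdec) hm () x).hasSum

theorem jointCk_comp_projIcc {T M : ℝ} (hT : -T ≤ T) {u : ℝ → ℝ → ℝ}
    (hmem : ∀ t ∈ Set.Icc (-T) T, MemHs 12 (u t))
    (hM : ∀ t ∈ Set.Icc (-T) T, hsNorm 12 (u t) ≤ M) (hcont : ContInHs 0 (Set.Icc (-T) T) u) :
    JointCk 10 (fun t => u (Set.projIcc (-T) T hT t)) := by
  have h := jointCk_tsum_mode (c := fun t k => fc (u (Set.projIcc (-T) T hT t)) k)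
    (fun k => (continuousOn_iff_continuous_domRestrict.mp (continuousOn_fc hmem hcont k)).comp
      continuous_projIcc)
    (fun t k => norm_fc_le_of_hsNorm_le (hmem _ (Set.projIcc (-T) T hT t).2)
      (hM _ (Set.projIcc (-T) T hT t).2) k) 10 0 le_rfl
  convert h using 2 with t
  exact eq_tsum_mode_fc (hmem _ (Set.projIcc (-T) T hT t).2) (hM _ (Set.projIcc (-T) T hT t).2)

section Resonance

variable {j0 : ℕ} {lam : Fin j0 → ℝ} {a b c d : Fin j0 → ℕ}

theorem integral_polyEval_eq_of_PN {f : ℝ → ℝ} (hf : ContDiff ℝ 3 f) :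
    ∫ x in (0 : ℝ)..(2 * Real.pi), polyEval (fun j => lam j * b j) a (fun j => b j - 1) c d
      (iteratedDeriv 3 f x) (iteratedDeriv 2 f x) (iteratedDeriv 1 f x) (iteratedDeriv 0 f x) =
      2 * Real.pi * PN j0 lam a b c d f := by
  have hc (m : ℕ) (hm : m ≤ 3) : Continuous (iteratedDeriv m f) :=
    hf.continuous_iteratedDeriv m (by exact_mod_cast hm)
  have h3 := hc 3 (by norm_num)
  have h2 := hc 2 (by norm_num)
  have h1 := hc 1 (by norm_num)
  have h0 := hc 0 (by norm_num)
  unfold polyEval PN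
  rw [intervalIntegral.integral_finsetSum
    (fun j _ => Continuous.intervalIntegrable (by fun_prop) _ _), Finset.mul_sum]
  refine Finset.sum_congr rfl fun j _ => ?_
  rw [← mul_assoc, show 2 * Real.pi * (lam j * b j / (2 * Real.pi)) = lam j * b j by
    field_simp, ← intervalIntegral.integral_const_mul]
  refine intervalIntegral.integral_congr fun x _ => ?_
  simp only [iteratedDeriv_one, iteratedDeriv_zero]
  ring

theorem integral_polyEval_tsum_mode_eq_zero
    (hPN : ∀ f : ℝ → ℝ, ContDiff ℝ (⊤ : ℕ∞) f → Function.Periodic f (2 * Real.pi) →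
      PN j0 lam a b c d f = 0) {e : ℤ → ℂ} {M : ℝ}
    (hM : ∀ k : ℤ, ‖e k‖ ≤ M * ((1 + (k : ℝ) ^ 2) ^ 6)⁻¹) :
    ∫ x in (0 : ℝ)..(2 * Real.pi), polyEval (fun j => lam j * b j) a (fun j => b j - 1) c d
      (∑' k, mode 3 (e k) k x) (∑' k, mode 2 (e k) k x) (∑' k, mode 1 (e k) k x)
      (∑' k, mode 0 (e k) k x) = 0 := by
  set B : ℝ := ∑' k : ℤ, M * (1 + (k : ℝ) ^ 2)⁻¹ with hB
  have hsB : Summable fun k : ℤ => M * (1 + (k : ℝ) ^ 2)⁻¹ := summable_inv_one_add_sq.mul_left M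
  have hM0 : 0 ≤ M := by simpa using (norm_nonneg _).trans (hM 0)
  have hbound (S : Finset ℤ) {m : ℕ} (hm : m ≤ 10) (x : ℝ) : |∑ k ∈ S, mode m (e k) k x| ≤ B :=
    (Finset.abs_sum_le_sum_abs _ _).trans
      ((Finset.sum_le_sum fun k _ => abs_mode_le_of_decay hm (hM k) x).trans
        (hsB.sum_le_tsum S fun k _ => by positivity))
  have hzero (S : Finset ℤ) : ∫ x in (0 : ℝ)..(2 * Real.pi),
      polyEval (fun j => lam j * b j) a (fun j => b j - 1) c d
      (∑ k ∈ S, mode 3 (e k) k x) (∑ k ∈ S, mode 2 (e k) k x) (∑ k ∈ S, mode 1 (e k) k x)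
      (∑ k ∈ S, mode 0 (e k) k x) = 0 := by
    have h := integral_polyEval_eq_of_PN (lam := lam) (a := a) (b := b) (c := c) (d := d)
      (contDiff_infty.mp (contDiff_sum_mode S e) 3)
    rw [hPN _ (contDiff_sum_mode S e) fun x => by simp only [fun k => periodic_mode 0 (e k) k x],
      mul_zero] at h
    simpa only [iteratedDeriv_sum_mode] using h
  have hlim := intervalIntegral.tendsto_integral_filter_of_dominated_convergence
    (μ := MeasureTheory.volume) (a := 0) (b := 2 * Real.pi) (l := Filter.atTop)
    (F := fun (S : Finset ℤ) x => polyEval (fun j => lam j * b j) a (fun j => b j - 1) c d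
      (∑ k ∈ S, mode 3 (e k) k x) (∑ k ∈ S, mode 2 (e k) k x) (∑ k ∈ S, mode 1 (e k) k x)
      (∑ k ∈ S, mode 0 (e k) k x))
    (f := fun x => polyEval (fun j => lam j * b j) a (fun j => b j - 1) c d
      (∑' k, mode 3 (e k) k x) (∑' k, mode 2 (e k) k x) (∑' k, mode 1 (e k) k x)
      (∑' k, mode 0 (e k) k x))
    (fun _ => ∑ j, |lam j * b j| * B ^ a j * B ^ (b j - 1) * B ^ c j * B ^ d j) ?_ ?_ ?_ ?_
  · simp only [hzero] at hlim
    exact (tendsto_nhds_unique hlim tendsto_const_nhds)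
  · refine Filter.Eventually.of_forall fun S => Continuous.aestronglyMeasurable ?_
    have hc (m : ℕ) : Continuous fun x => ∑ k ∈ S, mode m (e k) k x :=
      continuous_iff_continuousAt.mpr fun x => (hasDerivAt_sum_mode S e m x).continuousAt
    unfold polyEval
    have h3 := hc 3
    have h2 := hc 2
    have h1 := hc 1
    have h0 := hc 0
    fun_prop
  · refine Filter.Eventually.of_forall fun S => Filter.Eventually.of_forall fun x _ => ?_
    rw [Real.norm_eq_abs, polyEval]
    refine (Finset.abs_sum_le_sum_abs _ _).trans (Finset.sum_le_sum fun j _ => ?_)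
    simp only [abs_mul, abs_pow]
    have hB0 : 0 ≤ B := (abs_nonneg _).trans (hbound ∅ (m := 0) (by norm_num) 0)
    gcongr <;> exact hbound S (by norm_num) x
  · exact intervalIntegrable_const
  · refine Filter.Eventually.of_forall fun x _ => ?_
    have hs {m : ℕ} (hm : m ≤ 10) := (summable_mode (P := Unit) (c := fun _ => e)
      (fun _ => hM) hm () x).hasSum
    unfold polyEval
    refine tendsto_finsetSum _ fun j _ => ?_
    exact ((((tendsto_const_nhds.mul ((hs (m := 3) (by norm_num)).pow _)).mul
      ((hs (m := 2) (by norm_num)).pow _)).mul ((hs (m := 1) (by norm_num)).pow _)).mul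
      ((hs (m := 0) (by norm_num)).pow _))

end Resonance

theorem integral_integral_swap_of_continuous {F : ℝ → ℝ → ℝ}
    (hF : Continuous (Function.uncurry F)) (a b c d : ℝ) :
    ∫ x in a..b, ∫ y in c..d, F x y = ∫ y in c..d, ∫ x in a..b, F x y := by
  refine MeasureTheory.intervalIntegral_intervalIntegral_swap ?_
  exact (hF.continuousOn.integrableOn_compact (isCompact_uIcc.prod isCompact_uIcc)).mono_set
    (Set.prod_mono (Set.uIoc_subset_uIcc (a := a) (b := b)) (Set.uIoc_subset_uIcc (a := c) (b := d)))

/-- The lemma of du Bois-Reymond. -/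
theorem sub_eq_integral_of_forall_integral_eq_zero {A B : ℝ} (hAB : A < B) {q r : ℝ → ℝ}
    (hq : Continuous q) (hr : Continuous r)
    (h : ∀ η : ℝ → ℝ, ContDiff ℝ (⊤ : ℕ∞) η → (∀ t, t ∉ Set.Ioo A B → η t = 0) →
      ∫ t in A..B, (deriv η t * q t + η t * r t) = 0) :
    ∀ s ∈ Set.Icc A B, ∀ t ∈ Set.Icc A B, q t - q s = ∫ τ in s..t, r τ := by
  set p : ℝ → ℝ := fun t => q t - ∫ τ in A..t, r τ with hp
  have hR (t : ℝ) : HasDerivAt (fun t => ∫ τ in A..t, r τ) (r t) t :=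
    (hr.integral_hasStrictDerivAt A t).hasDerivAt
  have hRc : Continuous fun t => ∫ τ in A..t, r τ :=
    continuous_iff_continuousAt.mpr fun t => (hR t).continuousAt
  have hpc : Continuous p := hq.sub hRc
  have hmain (η : ℝ → ℝ) (hη : ContDiff ℝ (⊤ : ℕ∞) η) (h0 : ∀ t, t ∉ Set.Ioo A B → η t = 0) :
      ∫ t in A..B, deriv η t * p t = 0 := by
    have hη1 : ContDiff ℝ 1 η := contDiff_infty.mp hη 1
    have hd : Continuous (deriv η) := hη1.continuous_deriv le_rfl
    have hibp := intervalIntegral.integral_mul_deriv_eq_deriv_mul (a := A) (b := B)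
      (u := η) (v := fun t => ∫ τ in A..t, r τ)
      (fun t _ => (hη1.differentiable one_ne_zero t).hasDerivAt) (fun t _ => hR t)
      (hd.intervalIntegrable _ _) (hr.intervalIntegrable _ _)
    rw [h0 A (by simp), h0 B (by simp), zero_mul, zero_mul, sub_zero, zero_sub] at hibp
    have hηc := hη.continuous
    have hi1 : Continuous fun t => deriv η t * q t := by fun_prop
    have hi2 : Continuous fun t => η t * r t := by fun_prop
    have hi3 : Continuous fun t => deriv η t * ∫ τ in A..t, r τ := by fun_prop
    have h1 := h η hη h0
    rw [intervalIntegral.integral_add (hi1.intervalIntegrable _ _) (hi2.intervalIntegrable _ _),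
      hibp, ← sub_eq_add_neg, ← intervalIntegral.integral_sub (hi1.intervalIntegrable _ _)
      (hi3.intervalIntegrable _ _)] at h1
    rw [← h1]
    exact intervalIntegral.integral_congr fun t _ => by simp only [hp]; ring
  have hintv {g : ℝ → ℝ} (hg : Function.support g ⊆ Set.Ioo A B) :
      ∫ t in A..B, g t = ∫ t, g t :=
    intervalIntegral.integral_eq_integral_of_support_subset (hg.trans Set.Ioo_subset_Ioc_self)
  obtain ⟨χ, hχs, hχc, hχd, hχr, hχ1⟩ := exists_contDiff_tsupport_subset (n := (⊤ : ℕ∞))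
    (Ioo_mem_nhds (show A < (A + B) / 2 by linarith) (show (A + B) / 2 < B by linarith))
  have hχi : 0 < ∫ t, χ t := hχd.continuous.integral_pos_of_hasCompactSupport_nonneg_nonzero hχc
    (fun t => (hχr ⟨t, rfl⟩).1) (x := (A + B) / 2) (by rw [hχ1]; exact one_ne_zero)
  set m : ℝ := (∫ t in A..B, χ t * p t) / ∫ t, χ t with hm
  have hzero (g : ℝ → ℝ) (hg : ContDiff ℝ (⊤ : ℕ∞) g) (hgs : tsupport g ⊆ Set.Ioo A B) :
      ∫ t in A..B, g t * (p t - m) = 0 := by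
    set κ : ℝ := (∫ t, g t) / ∫ t, χ t with hκ
    set z : ℝ → ℝ := fun t => g t - κ * χ t with hz
    have hgc := hg.continuous
    have hχcont := hχd.continuous
    have hi1 : Continuous fun t => κ * χ t := by fun_prop
    have hi2 : Continuous fun t => g t * p t := by fun_prop
    have hi3 : Continuous fun t => κ * (χ t * p t) := by fun_prop
    have hi4 : Continuous fun t => g t * m := by fun_prop
    have hzd : ContDiff ℝ (⊤ : ℕ∞) z := hg.sub (contDiff_const.mul hχd)
    have hz0 (t : ℝ) (ht : t ∉ Set.Ioo A B) : z t = 0 := by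
      simp only [hz]
      rw [image_eq_zero_of_notMem_tsupport fun h' => ht (hgs h'),
        image_eq_zero_of_notMem_tsupport fun h' => ht (hχs h'), mul_zero, sub_zero]
    have hzI : ∫ t in A..B, z t = 0 := by
      simp only [hz]
      rw [intervalIntegral.integral_sub (hg.continuous.intervalIntegrable _ _)
        (hi1.intervalIntegrable _ _),
        intervalIntegral.integral_const_mul, hintv (subset_closure.trans hgs),
        hintv (subset_closure.trans hχs), hκ, div_mul_cancel₀ _ hχi.ne', sub_self]
    have hder (t : ℝ) : HasDerivAt (fun t => ∫ τ in A..t, z τ) (z t) t :=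
      (hzd.continuous.integral_hasStrictDerivAt A t).hasDerivAt
    have hdz : deriv (fun t => ∫ τ in A..t, z τ) = z := funext fun t => (hder t).deriv
    have hη : ContDiff ℝ (⊤ : ℕ∞) (fun t => ∫ τ in A..t, z τ) := by
      rw [contDiff_infty_iff_deriv, hdz]
      exact ⟨fun t => (hder t).differentiableAt, hzd⟩
    have hη0 (t : ℝ) (ht : t ∉ Set.Ioo A B) : ∫ τ in A..t, z τ = 0 := by
      rcases le_or_gt t A with h1 | h1
      · rw [intervalIntegral.integral_congr (g := fun _ => (0 : ℝ)), intervalIntegral.integral_zero]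
        intro τ hτ
        rw [Set.uIcc_of_ge h1] at hτ
        exact hz0 τ fun h' => absurd h'.1 (not_lt.mpr hτ.2)
      · have h2 : B ≤ t := not_lt.mp fun h' => ht ⟨h1, h'⟩
        rw [← intervalIntegral.integral_add_adjacent_intervals
          (hzd.continuous.intervalIntegrable A B) (hzd.continuous.intervalIntegrable B t), hzI,
          zero_add, intervalIntegral.integral_congr (g := fun _ => (0 : ℝ)),
          intervalIntegral.integral_zero]
        intro τ hτ
        rw [Set.uIcc_of_le h2] at hτ
        exact hz0 τ fun h' => absurd h'.2 (not_lt.mpr hτ.1)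
    have h1 := hmain _ hη hη0
    rw [hdz] at h1
    have h2 : ∫ t in A..B, z t * p t =
        (∫ t in A..B, g t * p t) - κ * ∫ t in A..B, χ t * p t := by
      rw [← intervalIntegral.integral_const_mul, ← intervalIntegral.integral_sub
        (hi2.intervalIntegrable _ _) (hi3.intervalIntegrable _ _)]
      exact intervalIntegral.integral_congr fun t _ => by simp only [hz]; ring
    have h3 : ∫ t in A..B, g t * (p t - m) =
        (∫ t in A..B, g t * p t) - (∫ t in A..B, g t) * m := by
      rw [← intervalIntegral.integral_mul_const, ← intervalIntegral.integral_sub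
        (hi2.intervalIntegrable _ _) (hi4.intervalIntegrable _ _)]
      exact intervalIntegral.integral_congr fun t _ => by ring
    rw [h3, hintv (subset_closure.trans hgs), hm, ← h1, h2, hκ]
    ring
  have hae := isOpen_Ioo.ae_eq_zero_of_integral_contDiff_smul_eq_zero (U := Set.Ioo A B)
    (f := fun t => p t - m) (μ := MeasureTheory.volume)
    ((hpc.sub continuous_const).locallyIntegrable.locallyIntegrableOn _) fun g hg _ hgs => by
      rw [← hzero g hg hgs, hintv]
      · rfl
      · exact (Function.support_mul_subset_left _ _).trans (subset_closure.trans hgs)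
  have hIoo : Set.EqOn p (fun _ => m) (Set.Ioo A B) := by
    refine MeasureTheory.Measure.eqOn_open_of_ae_eq (μ := MeasureTheory.volume) ?_ isOpen_Ioo
      hpc.continuousOn continuousOn_const
    rw [Filter.EventuallyEq, MeasureTheory.ae_restrict_iff' measurableSet_Ioo]
    filter_upwards [hae] with t ht h'
    exact sub_eq_zero.mp (ht h')
  have hIcc : Set.EqOn p (fun _ => m) (Set.Icc A B) := by
    rw [← closure_Ioo hAB.ne]
    exact hIoo.closure hpc continuous_const
  intro s hs t ht
  have h1 : q s - (∫ τ in A..s, r τ) = m := hIcc hs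
  have h2 : q t - (∫ τ in A..t, r τ) = m := hIcc ht
  rw [← intervalIntegral.integral_interval_sub_left (hr.intervalIntegrable A t)
    (hr.intervalIntegrable A s)]
  linarith

theorem integral_mul_iteratedDeriv {L : ℝ} {e : ℝ → ℝ} (he : ContDiff ℝ (⊤ : ℕ∞) e)
    (hep : Function.Periodic e L) {m : ℕ} {f : ℝ → ℝ} (hf : ContDiff ℝ m f)
    (hfp : Function.Periodic f L) :
    ∫ x in (0 : ℝ)..L, f x * iteratedDeriv m e x =
      (-1) ^ m * ∫ x in (0 : ℝ)..L, iteratedDeriv m f x * e x := by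
  induction m generalizing f with
  | zero => simp
  | succ m ih =>
    have hf' : ContDiff ℝ m (deriv f) :=
      ((contDiff_succ_iff_deriv (n := (m : WithTop ℕ∞))).mp (by exact_mod_cast hf)).2.2
    have hfd : Differentiable ℝ f := hf.differentiable (by simp)
    have hem (k : ℕ) (x : ℝ) : HasDerivAt (iteratedDeriv k e) (iteratedDeriv (k + 1) e x) x := by
      rw [iteratedDeriv_succ]
      exact ((contDiff_infty.mp he (k + 1)).differentiable_iteratedDeriv k
        (by exact_mod_cast Nat.lt_succ_self k) x).hasDerivAt
    have hec (k : ℕ) : Continuous (iteratedDeriv k e) :=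
      (contDiff_infty.mp he k).continuous_iteratedDeriv k le_rfl
    have hb1 : f L = f 0 := by simpa using hfp 0
    have hb2 : iteratedDeriv m e L = iteratedDeriv m e 0 := by
      simpa using periodic_iteratedDeriv hep m 0
    rw [intervalIntegral.integral_mul_deriv_eq_deriv_mul (fun x _ => (hfd x).hasDerivAt)
      (fun x _ => hem m x) (hf'.continuous.intervalIntegrable _ _)
      ((hec (m + 1)).intervalIntegrable _ _), hb1, hb2, ih hf' (periodic_deriv hfp),
      iteratedDeriv_succ', pow_succ]
    ring

theorem eq_zero_of_forall_integral_mul_eq_zero {h : ℝ → ℝ} (hc : Continuous h)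
    (hp : Function.Periodic h (2 * Real.pi))
    (h0 : ∀ e : ℝ → ℝ, ContDiff ℝ (⊤ : ℕ∞) e → Function.Periodic e (2 * Real.pi) →
      ∫ x in (0 : ℝ)..(2 * Real.pi), h x * e x = 0) (x : ℝ) : h x = 0 := by
  have hfc : fc h = 0 := by
    ext k
    have hcos := h0 (fun x => Real.cos (k * x)) (by fun_prop) fun x => by
      simp only [mul_add, Real.cos_add_int_mul_two_pi]
    have hsin := h0 (fun x => Real.sin (k * x)) (by fun_prop) fun x => by
      simp only [mul_add, Real.sin_add_int_mul_two_pi]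
    have hsplit : ∫ x in (0 : ℝ)..(2 * Real.pi),
        (h x : ℂ) * Complex.exp (-Complex.I * (k : ℂ) * (x : ℂ)) =
        ((∫ x in (0 : ℝ)..(2 * Real.pi), h x * Real.cos (k * x) : ℝ) : ℂ) -
          ((∫ x in (0 : ℝ)..(2 * Real.pi), h x * Real.sin (k * x) : ℝ) : ℂ) * Complex.I := by
      rw [← intervalIntegral.integral_ofReal, ← intervalIntegral.integral_ofReal,
        ← intervalIntegral.integral_mul_const, ← intervalIntegral.integral_sub]
      · refine intervalIntegral.integral_congr fun x _ => ?_
        rw [show -Complex.I * (k : ℂ) * (x : ℂ) = (-((k : ℂ) * x)) * Complex.I by ring,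
          Complex.exp_mul_I, Complex.cos_neg, Complex.sin_neg]
        push_cast
        ring
      all_goals exact Continuous.intervalIntegrable (by fun_prop) _ _
    rw [fc, hsplit, hcos, hsin]
    simp
  have h1 := hasSum_mode_fc hc hp (by rw [hfc]; exact summable_zero) x
  rw [hfc] at h1
  simpa [mode] using h1.unique (hasSum_zero.congr_fun fun k => by simp [mode])

section Evolution

variable {γ0 γ1 γ2 : ℝ} {j0 : ℕ} {lam : Fin j0 → ℝ} {a b c d : Fin j0 → ℕ}

/-- The right-hand side of the equation solved for `∂_t u`. -/
noncomputable def vectorField (γ0 γ1 γ2 : ℝ) (lam : Fin j0 → ℝ) (a b c d : Fin j0 → ℕ)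
    (f : ℝ → ℝ) (x : ℝ) : ℝ :=
  -γ0 * iteratedDeriv 5 f x - γ1 * iteratedDeriv 3 f x - γ2 * iteratedDeriv 1 f x +
    Nfun j0 lam a b c d f x

theorem jointCk_Nfun {n : ℕ} {f : ℝ → ℝ → ℝ} (hf : JointCk (n + 3) f) :
    JointCk n (fun t => Nfun j0 lam a b c d (f t)) := by
  have h := JointCk.polyEval lam a b c d (hf.iteratedDeriv (k := 3) n (by omega))
    (hf.iteratedDeriv (k := 2) n (by omega)) (hf.iteratedDeriv (k := 1) n (by omega))
    (hf.mono (Nat.le_add_right n 3))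
  convert h using 3 with t x
  exact Nfun_eq_polyEval ..

theorem jointCk_vectorField {n : ℕ} {f : ℝ → ℝ → ℝ} (hf : JointCk (n + 5) f) :
    JointCk n (fun t => vectorField γ0 γ1 γ2 lam a b c d (f t)) :=
  ((((hf.iteratedDeriv (k := 5) n (by omega)).const_mul (-γ0)).sub
    ((hf.iteratedDeriv (k := 3) n (by omega)).const_mul γ1)).sub
    ((hf.iteratedDeriv (k := 1) n (by omega)).const_mul γ2)).add
    (jointCk_Nfun (hf.mono (by omega)))

theorem periodic_vectorField {f : ℝ → ℝ} {L : ℝ} (hf : Function.Periodic f L) :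
    Function.Periodic (vectorField γ0 γ1 γ2 lam a b c d f) L := by
  intro x
  simp only [vectorField, Nfun_eq_polyEval, hf x, fun k => periodic_iteratedDeriv hf k x]

/-- The adjoint form of the equation tested against a smooth periodic function. -/
theorem integral_adjoint_eq_integral_vectorField {f e : ℝ → ℝ} {L : ℝ} (hf : ContDiff ℝ 5 f)
    (hfp : Function.Periodic f L) (he : ContDiff ℝ (⊤ : ℕ∞) e) (hep : Function.Periodic e L) :
    ∫ x in (0 : ℝ)..L, (f x * (γ0 * iteratedDeriv 5 e x + γ1 * iteratedDeriv 3 e x +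
      γ2 * iteratedDeriv 1 e x) + Nfun j0 lam a b c d f x * e x) =
    ∫ x in (0 : ℝ)..L, vectorField γ0 γ1 γ2 lam a b c d f x * e x := by
  have hec (k : ℕ) : Continuous (iteratedDeriv k e) :=
    (contDiff_infty.mp he k).continuous_iteratedDeriv k le_rfl
  have hfk (k : ℕ) (hk : k ≤ 5) : ContDiff ℝ k f := hf.of_le (by exact_mod_cast hk)
  have hfc (k : ℕ) (hk : k ≤ 5) : Continuous (iteratedDeriv k f) :=
    (hfk k hk).continuous_iteratedDeriv k le_rfl
  have hec5 := hec 5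
  have hec3 := hec 3
  have hec1 := hec 1
  have hecc := he.continuous
  have hfcc := hf.continuous
  have hfc5 := hfc 5 (by norm_num)
  have hfc3 := hfc 3 (by norm_num)
  have hfc2 := hfc 2 (by norm_num)
  have hfc1 := hfc 1 (by norm_num)
  have hN : Continuous (Nfun j0 lam a b c d f) := by
    rw [funext (Nfun_eq_polyEval lam a b c d f)]
    unfold polyEval
    fun_prop
  have h5 := integral_mul_iteratedDeriv he hep (hfk 5 le_rfl) hfp
  have h3 := integral_mul_iteratedDeriv he hep (hfk 3 (by norm_num)) hfp
  have h1 := integral_mul_iteratedDeriv he hep (hfk 1 (by norm_num)) hfp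
  have hl : ∫ x in (0 : ℝ)..L, (f x * (γ0 * iteratedDeriv 5 e x + γ1 * iteratedDeriv 3 e x +
      γ2 * iteratedDeriv 1 e x) + Nfun j0 lam a b c d f x * e x) =
      γ0 * (∫ x in (0 : ℝ)..L, f x * iteratedDeriv 5 e x) +
      γ1 * (∫ x in (0 : ℝ)..L, f x * iteratedDeriv 3 e x) +
      γ2 * (∫ x in (0 : ℝ)..L, f x * iteratedDeriv 1 e x) +
      ∫ x in (0 : ℝ)..L, Nfun j0 lam a b c d f x * e x := by
    simp only [← intervalIntegral.integral_const_mul]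
    rw [← intervalIntegral.integral_add, ← intervalIntegral.integral_add,
      ← intervalIntegral.integral_add]
    · exact intervalIntegral.integral_congr fun x _ => by ring
    all_goals exact Continuous.intervalIntegrable (by fun_prop) _ _
  have hr : ∫ x in (0 : ℝ)..L, vectorField γ0 γ1 γ2 lam a b c d f x * e x =
      -γ0 * (∫ x in (0 : ℝ)..L, iteratedDeriv 5 f x * e x) +
      -γ1 * (∫ x in (0 : ℝ)..L, iteratedDeriv 3 f x * e x) +
      -γ2 * (∫ x in (0 : ℝ)..L, iteratedDeriv 1 f x * e x) +
      ∫ x in (0 : ℝ)..L, Nfun j0 lam a b c d f x * e x := by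
    simp only [← intervalIntegral.integral_const_mul]
    rw [← intervalIntegral.integral_add, ← intervalIntegral.integral_add,
      ← intervalIntegral.integral_add]
    · exact intervalIntegral.integral_congr fun x _ => by simp only [vectorField]; ring
    all_goals exact Continuous.intervalIntegrable (by fun_prop) _ _
  rw [hl, hr, h5, h3, h1]
  ring

theorem sub_eq_integral_vectorField {T : ℝ} (hT : 0 < T) {U : ℝ → ℝ → ℝ} (hU : JointCk 5 U)
    (hUp : ∀ t, Function.Periodic (U t) (2 * Real.pi))
    (hsol : IsSolution γ0 γ1 γ2 j0 lam a b c d (-T) T U) (t : ℝ) (ht : t ∈ Set.Icc (-T) T) (x : ℝ) :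
    U t x - U 0 x = ∫ τ in (0 : ℝ)..t, vectorField γ0 γ1 γ2 lam a b c d (U τ) x := by
  set G : ℝ → ℝ → ℝ := fun τ => vectorField γ0 γ1 γ2 lam a b c d (U τ) with hG
  have hGc : Continuous (Function.uncurry G) := (jointCk_vectorField (n := 0) hU).continuous
  have hGp (τ : ℝ) : Function.Periodic (G τ) (2 * Real.pi) := periodic_vectorField (hUp τ)
  change U t x - U 0 x = ∫ τ in (0 : ℝ)..t, G τ x
  clear_value G
  have hUc : Continuous (Function.uncurry U) := hU.continuous
  have hx {F : ℝ → ℝ → ℝ} (hF : Continuous (Function.uncurry F)) (s : ℝ) : Continuous (F s) :=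
    hF.comp (Continuous.prodMk_right s)
  have hIc : Continuous fun x => ∫ τ in (0 : ℝ)..t, G τ x :=
    continuous_integral_of_continuous (f := fun x τ => G τ x) (hGc.comp continuous_swap)
      continuous_const continuous_const
  have hUtc := hx hUc t
  have hU0c := hx hUc 0
  have hhc : Continuous fun x => U t x - U 0 x - ∫ τ in (0 : ℝ)..t, G τ x :=
    (hUtc.sub hU0c).sub hIc
  have hhp : Function.Periodic (fun x => U t x - U 0 x - ∫ τ in (0 : ℝ)..t, G τ x)
      (2 * Real.pi) := fun x => by simp only [hUp _ x, fun τ => hGp τ x]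
  refine sub_eq_zero.mp (eq_zero_of_forall_integral_mul_eq_zero hhc hhp ?_ x)
  intro e he hep
  have hec := he.continuous
  have hUe : Continuous (Function.uncurry fun s x => U s x * e x) :=
    hUc.mul (hec.comp continuous_snd)
  have hGe : Continuous (Function.uncurry fun s x => G s x * e x) :=
    hGc.mul (hec.comp continuous_snd)
  have hdbr := sub_eq_integral_of_forall_integral_eq_zero (neg_lt_self hT)
    (q := fun s => ∫ x in (0 : ℝ)..(2 * Real.pi), U s x * e x)
    (r := fun s => ∫ x in (0 : ℝ)..(2 * Real.pi), G s x * e x)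
    (continuous_integral_of_continuous hUe continuous_const continuous_const)
    (continuous_integral_of_continuous hGe continuous_const continuous_const) ?_
    0 ⟨by linarith, hT.le⟩ t ht
  · have hswap := integral_integral_swap_of_continuous hGe 0 t 0 (2 * Real.pi)
    rw [hswap] at hdbr
    have hsplit : ∫ x in (0 : ℝ)..(2 * Real.pi),
        (U t x - U 0 x - ∫ τ in (0 : ℝ)..t, G τ x) * e x =
        (∫ x in (0 : ℝ)..(2 * Real.pi), U t x * e x) - (∫ x in (0 : ℝ)..(2 * Real.pi), U 0 x * e x)
          - ∫ x in (0 : ℝ)..(2 * Real.pi), ∫ τ in (0 : ℝ)..t, G τ x * e x := by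
      simp only [intervalIntegral.integral_mul_const]
      rw [← intervalIntegral.integral_sub, ← intervalIntegral.integral_sub]
      · exact intervalIntegral.integral_congr fun x _ => by ring
      all_goals exact Continuous.intervalIntegrable (by fun_prop) _ _
    rw [hsplit, hdbr, sub_self]
  · intro η hη hη0
    have hψ := hsol.2 (fun s x => η s * e x)
      ((hη.comp contDiff_fst).mul (he.comp contDiff_snd)) (fun s x => by simp only [hep x])
      (fun s hs x => by rw [hη0 s hs, zero_mul])
    refine Eq.trans (intervalIntegral.integral_congr fun s _ => ?_) hψ
    have hder (x : ℝ) : deriv (fun τ => η τ * e x) s = deriv η s * e x := deriv_mul_const_field _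
    have hid (k : ℕ) (x : ℝ) : iteratedDeriv k (fun x => η s * e x) x = η s * iteratedDeriv k e x :=
      iteratedDeriv_const_mul_field _ _
    have hUs5 : ContDiff ℝ 5 (U s) := hU.contDiff s
    have had := integral_adjoint_eq_integral_vectorField (γ0 := γ0) (γ1 := γ1) (γ2 := γ2)
      (lam := lam) (a := a) (b := b) (c := c) (d := d) hUs5 (hUp s) he hep
    have hec' (k : ℕ) : Continuous (iteratedDeriv k e) :=
      (contDiff_infty.mp he k).continuous_iteratedDeriv k le_rfl
    have hec5 := hec' 5
    have hec3 := hec' 3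
    have hec1 := hec' 1
    have hUsc := hx hUc s
    have hN : Continuous (Nfun j0 lam a b c d (U s)) :=
      hx (jointCk_Nfun (n := 0) (hU.mono (by norm_num))).continuous s
    simp only [hder, ← iteratedDeriv_one (f := fun x => η s * e x), hid, hG]
    rw [← had, ← intervalIntegral.integral_const_mul, ← intervalIntegral.integral_const_mul,
      ← intervalIntegral.integral_add]
    · exact intervalIntegral.integral_congr fun x _ => by ring
    all_goals exact Continuous.intervalIntegrable (by fun_prop) _ _

end Evolution

theorem mode_segment (m : ℕ) (c₁ c₂ : ℂ) (θ : ℝ) (k : ℤ) (x : ℝ) :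
    mode m (c₂ + θ * (c₁ - c₂)) k x = mode m c₂ k x + θ * (mode m c₁ k x - mode m c₂ k x) := by
  simp only [mode]
  rw [show (Complex.I * (k : ℂ)) ^ m * (c₂ + θ * (c₁ - c₂)) * Complex.exp (Complex.I * k * x) =
    (Complex.I * k) ^ m * c₂ * Complex.exp (Complex.I * k * x) +
    θ * ((Complex.I * k) ^ m * c₁ * Complex.exp (Complex.I * k * x) -
      (Complex.I * k) ^ m * c₂ * Complex.exp (Complex.I * k * x)) by ring,
    Complex.add_re, Complex.re_ofReal_mul, Complex.sub_re]

section Uniqueness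

variable {γ0 γ1 γ2 : ℝ} {j0 : ℕ} {lam : Fin j0 → ℝ} {a b c d : Fin j0 → ℕ}

theorem integral_segmentAverage_eq_zero
    (hPN : ∀ f : ℝ → ℝ, ContDiff ℝ (⊤ : ℕ∞) f → Function.Periodic f (2 * Real.pi) →
      PN j0 lam a b c d f = 0) {f g : ℝ → ℝ → ℝ} (hfJ : JointCk 3 f) (hgJ : JointCk 3 g) {s M₁ M₂ : ℝ}
    (hf : MemHs 12 (f s)) (hg : MemHs 12 (g s)) (hfM : hsNorm 12 (f s) ≤ M₁)
    (hgM : hsNorm 12 (g s) ≤ M₂) :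
    ∫ x in (0 : ℝ)..(2 * Real.pi),
      segmentAverage (fun j => lam j * b j) a (fun j => b j - 1) c d f g s x = 0 := by
  have hc (m : ℕ) (hm : m ≤ 3) : Continuous fun q : ℝ × ℝ => iteratedDeriv m (g s) q.1 +
      q.2 * (iteratedDeriv m (f s) q.1 - iteratedDeriv m (g s) q.1) := by
    have h1 : Continuous (iteratedDeriv m (f s)) :=
      (hfJ.contDiff s).continuous_iteratedDeriv m (by exact_mod_cast hm)
    have h2 : Continuous (iteratedDeriv m (g s)) :=
      (hgJ.contDiff s).continuous_iteratedDeriv m (by exact_mod_cast hm)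
    fun_prop
  unfold segmentAverage
  rw [integral_integral_swap_of_continuous, intervalIntegral.integral_congr (g := fun _ => (0 : ℝ)),
    intervalIntegral.integral_zero]
  · intro θ hθ
    rw [Set.uIcc_of_le zero_le_one] at hθ
    let e : ℤ → ℂ := fun k => fc (g s) k + θ * (fc (f s) k - fc (g s) k)
    have hsum (m : ℕ) (hm : m ≤ 10) (x : ℝ) : ∑' k, mode m (e k) k x = iteratedDeriv m (g s) x +
        θ * (iteratedDeriv m (f s) x - iteratedDeriv m (g s) x) := by
      have h1 := hasSum_iteratedDeriv_mode_fc hf hfM hm x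
      have h2 := hasSum_iteratedDeriv_mode_fc hg hgM hm x
      simp only [e, mode_segment]
      exact (h2.add ((h1.sub h2).mul_left θ)).tsum_eq
    have he (k : ℤ) : ‖e k‖ ≤ (M₂ + (M₁ + M₂)) * ((1 + (k : ℝ) ^ 2) ^ 6)⁻¹ := by
      have h1 := norm_fc_le_of_hsNorm_le hf hfM k
      have h2 := norm_fc_le_of_hsNorm_le hg hgM k
      calc ‖e k‖ ≤ ‖fc (g s) k‖ + ‖(θ : ℂ)‖ * ‖fc (f s) k - fc (g s) k‖ :=
            (norm_add_le _ _).trans_eq (by rw [norm_mul])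
        _ ≤ ‖fc (g s) k‖ + 1 * (‖fc (f s) k‖ + ‖fc (g s) k‖) := by
            gcongr
            · rw [Complex.norm_real, Real.norm_of_nonneg hθ.1]
              exact hθ.2
            · exact norm_sub_le _ _
        _ ≤ _ := by linarith
    have h := integral_polyEval_tsum_mode_eq_zero hPN he
    simpa only [hsum 3 (by norm_num), hsum 2 (by norm_num), hsum 1 (by norm_num),
      hsum 0 (by norm_num)] using h
  · have h3 := hc 3 le_rfl
    have h2 := hc 2 (by norm_num)
    have h1 := hc 1 (by norm_num)
    have h0 := hc 0 (by norm_num)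
    unfold polyEval Function.uncurry
    fun_prop

theorem IsSolution.congr {T1 T2 : ℝ} (hT : T1 ≤ T2) {u v : ℝ → ℝ → ℝ}
    (h : IsSolution γ0 γ1 γ2 j0 lam a b c d T1 T2 u) (huv : ∀ t ∈ Set.Icc T1 T2, v t = u t) :
    IsSolution γ0 γ1 γ2 j0 lam a b c d T1 T2 v := by
  refine ⟨fun t ht => huv t ht ▸ h.1 t ht, fun ψ hψ hψp hψ0 => ?_⟩
  refine Eq.trans (intervalIntegral.integral_congr fun t ht => ?_) (h.2 ψ hψ hψp hψ0)
  rw [Set.uIcc_of_le hT] at ht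
  simp only [huv t ht]

theorem hasDerivAt_integral_comp_sin {G : ℝ → ℝ} (hG : Continuous G) (T s : ℝ) :
    HasDerivAt (fun σ => ∫ τ in (0 : ℝ)..(T * Real.sin σ), G τ)
      (T * Real.cos s * G (T * Real.sin s)) s := by
  have h1 := (hG.integral_hasStrictDerivAt 0 (T * Real.sin s)).hasDerivAt
  rw [mul_comm]
  exact h1.comp s ((Real.hasDerivAt_sin s).const_mul T)

theorem JointCk.continuous_left {n : ℕ} {f : ℝ → ℝ → ℝ} (hf : JointCk n f) (x : ℝ) :
    Continuous fun t => f t x :=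
  hf.continuous.comp (Continuous.prodMk_left x)

/-- Along the time reparametrization `s ↦ T sin s` a solution on `[-T, T]` satisfies the equation
classically for all `s`. -/
theorem hasDerivAt_comp_sin {T : ℝ} (hT : 0 < T) {U : ℝ → ℝ → ℝ} (hU : JointCk 5 U)
    (hUp : ∀ t, Function.Periodic (U t) (2 * Real.pi))
    (hsol : IsSolution γ0 γ1 γ2 j0 lam a b c d (-T) T U) (s x : ℝ) :
    HasDerivAt (fun σ => U (T * Real.sin σ) x)
      (T * Real.cos s * vectorField γ0 γ1 γ2 lam a b c d (U (T * Real.sin s)) x) s := by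
  have hmem (σ : ℝ) : T * Real.sin σ ∈ Set.Icc (-T) T :=
    ⟨by nlinarith [Real.neg_one_le_sin σ], by nlinarith [Real.sin_le_one σ]⟩
  have heq : (fun σ => U (T * Real.sin σ) x) = fun σ => U 0 x +
      ∫ τ in (0 : ℝ)..(T * Real.sin σ), vectorField γ0 γ1 γ2 lam a b c d (U τ) x := by
    ext σ
    rw [← sub_eq_integral_vectorField hT hU hUp hsol _ (hmem σ) x]
    ring
  have hJ : JointCk 0 (fun t => vectorField γ0 γ1 γ2 lam a b c d (U t)) :=
    jointCk_vectorField (n := 0) hU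
  have hGc := hJ.continuous_left x
  rw [heq]
  exact (hasDerivAt_integral_comp_sin hGc T s).const_add (U 0 x)

end Uniqueness

/-- **Uniqueness for non-parabolic resonance type.**
If `P_N ≡ 0` (on smooth periodic functions), and `u₁, u₂ ∈ C([-T,T];L²) ∩ L^∞([-T,T];H^{12})`
are solutions with the same initial datum `φ ∈ H^{12}(𝕋)`, then `u₁ = u₂` on `[-T,T]`. -/
theorem lwp_nonparabolic_uniqueness
    (γ0 γ1 γ2 : ℝ) (hγ0 : γ0 ≠ 0)
    (j0 : ℕ) (lam : Fin j0 → ℝ) (a b c d : Fin j0 → ℕ)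
    (hp : ∀ j : Fin j0, 2 ≤ a j + b j + c j + d j)
    (hPN : ∀ f : ℝ → ℝ, ContDiff ℝ (⊤ : ℕ∞) f → Function.Periodic f (2 * Real.pi) →
      PN j0 lam a b c d f = 0)
    (T : ℝ) (hT : 0 < T) (φ : ℝ → ℝ) (hφ : MemHs 12 φ)
    (u₁ u₂ : ℝ → ℝ → ℝ)
    (hsol₁ : IsSolution γ0 γ1 γ2 j0 lam a b c d (-T) T u₁)
    (hsol₂ : IsSolution γ0 γ1 γ2 j0 lam a b c d (-T) T u₂)
    (hmem₁ : ∀ t ∈ Set.Icc (-T) T, MemHs 12 (u₁ t))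
    (hmem₂ : ∀ t ∈ Set.Icc (-T) T, MemHs 12 (u₂ t))
    (hbdd₁ : ∃ M : ℝ, ∀ t ∈ Set.Icc (-T) T, hsNorm 12 (u₁ t) ≤ M)
    (hbdd₂ : ∃ M : ℝ, ∀ t ∈ Set.Icc (-T) T, hsNorm 12 (u₂ t) ≤ M)
    (hcont₁ : ContInHs 0 (Set.Icc (-T) T) u₁)
    (hcont₂ : ContInHs 0 (Set.Icc (-T) T) u₂)
    (hinit₁ : u₁ 0 = φ) (hinit₂ : u₂ 0 = φ) :
    ∀ t ∈ Set.Icc (-T) T, ∀ x : ℝ, u₁ t x = u₂ t x := by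
  obtain ⟨M₁, hM₁⟩ := hbdd₁
  obtain ⟨M₂, hM₂⟩ := hbdd₂
  have hT' : -T ≤ T := by linarith
  let U (u : ℝ → ℝ → ℝ) : ℝ → ℝ → ℝ := fun t => u (Set.projIcc (-T) T hT' t)
  have hUeq (u : ℝ → ℝ → ℝ) (t : ℝ) (ht : t ∈ Set.Icc (-T) T) : U u t = u t := by
    simp only [U, Set.projIcc_of_mem hT' ht]
  have hJ₁ : JointCk 10 (U u₁) := jointCk_comp_projIcc hT' hmem₁ hM₁ hcont₁
  have hJ₂ : JointCk 10 (U u₂) := jointCk_comp_projIcc hT' hmem₂ hM₂ hcont₂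
  have hp₁ (t : ℝ) : Function.Periodic (U u₁ t) (2 * Real.pi) :=
    (hmem₁ _ (Set.projIcc (-T) T hT' t).2).2.1
  have hp₂ (t : ℝ) : Function.Periodic (U u₂ t) (2 * Real.pi) :=
    (hmem₂ _ (Set.projIcc (-T) T hT' t).2).2.1
  have hsin : Continuous fun s => T * Real.sin s := by fun_prop
  have hV₁ := hJ₁.comp_param hsin
  have hV₂ := hJ₂.comp_param hsin
  have key := eq_of_evolution (S := 2 * Real.pi) (γ1 := γ1) (γ2 := γ2)
    (κ := fun s => T * Real.cos s) hγ0 (by fun_prop) hV₁ hV₂ (fun s => hp₁ _) (fun s => hp₂ _)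
    (hasDerivAt_comp_sin hT (hJ₁.mono (by norm_num)) hp₁ (hsol₁.congr hT' (hUeq u₁)))
    (hasDerivAt_comp_sin hT (hJ₂.mono (by norm_num)) hp₂ (hsol₂.congr hT' (hUeq u₂)))
    (fun s => integral_segmentAverage_eq_zero hPN (hV₁.mono (by norm_num)) (hV₂.mono (by norm_num))
      (hmem₁ _ (Set.projIcc (-T) T hT' _).2) (hmem₂ _ (Set.projIcc (-T) T hT' _).2)
      (hM₁ _ (Set.projIcc (-T) T hT' _).2) (hM₂ _ (Set.projIcc (-T) T hT' _).2))
    (fun x => by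
      have h0 : (0 : ℝ) ∈ Set.Icc (-T) T := ⟨by linarith, hT.le⟩
      simp only [Real.sin_zero, mul_zero]
      rw [hUeq u₁ 0 h0, hUeq u₂ 0 h0, hinit₁, hinit₂])
  intro t ht x
  have htT : t / T ∈ Set.Icc (-1 : ℝ) 1 := by
    rw [Set.mem_Icc, le_div_iff₀ hT, div_le_iff₀ hT]
    exact ⟨by linarith [ht.1], by linarith [ht.2]⟩
  have hs : ∃ s ∈ Set.Icc 0 (2 * Real.pi), T * Real.sin s = t := by
    have hlow := Real.neg_pi_div_two_le_arcsin (t / T)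
    have hupp := Real.arcsin_le_pi_div_two (t / T)
    have hpi := Real.pi_pos
    refine ⟨Real.pi - Real.arcsin (t / T), ⟨by linarith, by linarith⟩, ?_⟩
    rw [Real.sin_pi_sub, Real.sin_arcsin htT.1 htT.2]
    field_simp
  obtain ⟨s, hs, hst⟩ := hs
  obtain ⟨y, hy, hxy⟩ := (hp₁ t).sub (hp₂ t) |>.exists_mem_Ico₀ Real.two_pi_pos x
  have h1 := key s hs y ⟨hy.1, hy.2.le⟩
  simp only [hst] at h1
  simp only [Pi.sub_apply, h1, sub_self] at hxy
  rw [hUeq _ t ht, hUeq _ t ht] at hxy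
  exact sub_eq_zero.mp hxy

end FifthOrderStmt1
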